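/- Let d ≥ 5, let M ∈ ℕ with M < d/2 − 1, let m ∈ ℝ, L ≥ 1, and let q be a real number with 0 < q ≤ C·L for some C > 0. Then for any δ > 0 and any w ∈ C^{M,d+1}(ℝ^d): I_q(0; A, m, L) = L^d·σ_∞(w; A, m) + O_{m,M,C,δ}( q^{M−δ} L^{d−M+δ} ‖w‖_{M,d+1} ), where I_q(0; A, m, L) := L^d ∫_{ℝ^d} w(z) h(q/L, F^m(z)) dz. -/

import Mathlib

open MeasureTheory Filter Topology Set
open scoped BigOperators Classical

noncomputable section

/-- `e_q(x) := exp(2πix/q)`. -/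
def eFun (q : ℕ) (x : ℝ) : ℂ := Complex.exp (2 * Real.pi * Complex.I * x / q)

/-- `F(z) = (1/2)⟨Az, z⟩` for an integer matrix `A`. -/
def Fq {d : ℕ} (A : Matrix (Fin d) (Fin d) ℤ) (z : Fin d → ℝ) : ℝ :=
  (1 / 2) * ∑ i, ∑ j, (A i j : ℝ) * z i * z j

/-- The exponential sum `S_q(c; A, t)`. -/
def Sq {d : ℕ} (q : ℕ) (c : Fin d → ℤ) (A : Matrix (Fin d) (Fin d) ℤ) (t : ℤ) : ℂ :=
  ∑ a ∈ (Finset.range q).filter (fun a => Nat.Coprime a q),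
    ∑ b : Fin d → Fin q,
      eFun q ((a : ℝ) * (Fq A (fun i => (b i : ℝ)) - (t : ℝ)) + ∑ i, (c i : ℝ) * (b i : ℝ))

/-- `σ_p(A,t) = Σ_l p^{-dl} S_{p^l}(0; A, t)`. -/
def sigmaP {d : ℕ} (p : ℕ) (A : Matrix (Fin d) (Fin d) ℤ) (t : ℤ) : ℂ :=
  ∑' l : ℕ, ((p : ℂ) ^ (d * l))⁻¹ * Sq (p ^ l) 0 A t

/-- `σ(A,t) = Π_p σ_p(A,t)`. -/
def sigmaA {d : ℕ} (A : Matrix (Fin d) (Fin d) ℤ) (t : ℤ) : ℂ :=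
  ∏' p : Nat.Primes, sigmaP (p : ℕ) A t

/-- `σ*(A) = Π_p (1 - p⁻¹) σ_p(A,0)`. -/
def sigmaStar {d : ℕ} (A : Matrix (Fin d) (Fin d) ℤ) : ℂ :=
  ∏' p : Nat.Primes, (1 - ((p : ℕ) : ℂ)⁻¹) * sigmaP (p : ℕ) A 0

/-- The weight `w₀`. -/
def wZero (x : ℝ) : ℝ := if |x| < 1 then Real.exp (1 / (x ^ 2 - 1)) else 0

def cZero : ℝ := ∫ x : ℝ, wZero x

def omegaFun (x : ℝ) : ℝ := (4 / cZero) * wZero (4 * x - 3)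

/-- The function `h(x,y) = Σ_{j≥1} (1/(xj)) [ω(xj) − ω(|y|/(xj))]`. -/
def hFun (x y : ℝ) : ℝ :=
  ∑' j : ℕ, (1 / (x * ((j : ℝ) + 1))) *
    (omegaFun (x * ((j : ℝ) + 1)) - omegaFun (|y| / (x * ((j : ℝ) + 1))))

/-- Japanese bracket `⟨z⟩ = max(1, ‖z‖)`. -/
def jap {d : ℕ} (z : Fin d → ℝ) : ℝ := max 1 ‖z‖

def normSet {d : ℕ} (n1 : ℕ) (n2 : ℝ) (f : (Fin d → ℝ) → ℝ) : Set ℝ :=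
  {r | ∃ (k : ℕ) (z : Fin d → ℝ), k ≤ n1 ∧ r = ‖iteratedFDeriv ℝ k f z‖ * jap z ^ n2}

/-- The norm `‖f‖_{n1,n2}`. -/
def wNorm {d : ℕ} (n1 : ℕ) (n2 : ℝ) (f : (Fin d → ℝ) → ℝ) : ℝ := sSup (normSet n1 n2 f)

/-- Membership in the class `C^{n1,n2}`. -/
def MemC {d : ℕ} (n1 : ℕ) (n2 : ℝ) (f : (Fin d → ℝ) → ℝ) : Prop :=
  ContDiff ℝ n1 f ∧ BddAbove (normSet n1 n2 f)

def jap1 (y : ℝ) : ℝ := max 1 |y|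

def normSet1 (n1 : ℕ) (n2 : ℝ) (f : ℝ → ℝ) : Set ℝ :=
  {r | ∃ (k : ℕ) (y : ℝ), k ≤ n1 ∧ r = |iteratedDeriv k f y| * jap1 y ^ n2}

def wNorm1 (n1 : ℕ) (n2 : ℝ) (f : ℝ → ℝ) : ℝ := sSup (normSet1 n1 n2 f)

def MemC1 (n1 : ℕ) (n2 : ℝ) (f : ℝ → ℝ) : Prop :=
  ContDiff ℝ n1 f ∧ BddAbove (normSet1 n1 n2 f)

/-- `N_L(w; A, m) = Σ_{z ∈ L⁻¹ℤ^d, F(z)=m} w(z)`. -/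
def NL {d : ℕ} (A : Matrix (Fin d) (Fin d) ℤ) (L m : ℝ) (w : (Fin d → ℝ) → ℝ) : ℝ :=
  ∑' v : Fin d → ℤ,
    if Fq A (fun i => (v i : ℝ) / L) = m then w (fun i => (v i : ℝ) / L) else 0

/-- `σ_∞(w; A, m)` as a limit. -/
def IsSigmaInf {d : ℕ} (A : Matrix (Fin d) (Fin d) ℤ) (m : ℝ) (w : (Fin d → ℝ) → ℝ)
    (s : ℝ) : Prop :=
  Tendsto (fun ε : ℝ => (1 / (2 * ε)) * ∫ z in {z : Fin d → ℝ | |Fq A z - m| ≤ ε}, w z)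
    (nhdsWithin 0 (Set.Ioi 0)) (nhds s)

def intCast' {d : ℕ} (c : Fin d → ℤ) : Fin d → ℝ := fun i => (c i : ℝ)

/-- the matrix of `F_d(x,y) = Σ x_i y_i` on `ℤ^{2s}`. -/
def Ad (s : ℕ) : Matrix (Fin (2 * s)) (Fin (2 * s)) ℤ :=
  fun i j => if i.val + s = j.val ∨ j.val + s = i.val then 1 else 0

/-- `F(z) = (1/2)⟨Az, z⟩` for a real matrix `A`. -/
def FqR {d : ℕ} (A : Matrix (Fin d) (Fin d) ℝ) (z : Fin d → ℝ) : ℝ :=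
  (1 / 2) * ∑ i, ∑ j, A i j * z i * z j


open FourierTransform in
lemma riemann_int (g : ℝ → ℝ) (hg : ContDiff ℝ (⊤ : ℕ∞) g) (hc : HasCompactSupport g)
    (N : ℕ) (hN : 2 ≤ N) :
    ∃ C : ℝ, 0 ≤ C ∧ ∀ x : ℝ, 0 < x → |x * ∑' j : ℤ, g (x * j) - ∫ t, g t| ≤ C * x ^ N := by
  have key : ∀ x : ℝ, 0 < x → ∃ S : SchwartzMap ℝ ℂ, ∀ t, S t = (g (x * t) : ℂ) := by
    intro x hx
    have h1 : HasCompactSupport (fun t => (g (x * t) : ℂ)) := by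
      have := hc.comp_homeomorph (Homeomorph.mulLeft₀ x hx.ne')
      exact this.comp_left (g := fun y : ℝ => (y : ℂ)) (by simp)
    have h2 : ContDiff ℝ (⊤ : ℕ∞) (fun t => (g (x * t) : ℂ)) := by
      refine Complex.ofRealCLM.contDiff.comp (hg.comp ?_)
      fun_prop
    exact ⟨h1.toSchwartzMap h2, fun t => rfl⟩
  obtain ⟨S1, hS1⟩ := key 1 one_pos
  obtain ⟨C0, hC0, hdec⟩ := (𝓕 S1).decay N 0
  have hsum : Summable (fun n : ℤ => C0 * |1 / (n : ℝ) ^ N|) :=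
    ((Real.summable_one_div_int_pow (p := N)).2 (by omega)).abs.mul_left _
  refine ⟨∑' n : ℤ, C0 * |1 / (n : ℝ) ^ N|, tsum_nonneg (fun n => by positivity), ?_⟩
  intro x hx
  obtain ⟨S, hS⟩ := key x hx
  have hF : ∀ n : ℝ, 𝓕 S n = (x⁻¹ : ℂ) * 𝓕 S1 (n / x) := by
    intro n
    rw [SchwartzMap.fourier_coe, SchwartzMap.fourier_coe, Real.fourier_real_eq_integral_exp_smul,
      Real.fourier_real_eq_integral_exp_smul]
    have := Measure.integral_comp_mul_left
      (fun v : ℝ => Complex.exp (↑(-2 * Real.pi * v * (n / x)) * Complex.I) • S1 v) x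
    rw [abs_of_pos (inv_pos.2 hx)] at this
    rw [← Complex.ofReal_inv, ← Complex.real_smul, ← this]
    congr 1
    ext v
    rw [hS, hS1, one_mul]
    have e : -2 * Real.pi * (x * v) * (n / x) = -2 * Real.pi * v * n := by field_simp
    rw [e]
  have hP := S.tsum_eq_tsum_fourier 0
  have hx' : (x : ℂ) ≠ 0 := by exact_mod_cast hx.ne'
  have e1 : (x : ℂ) * ∑' n : ℤ, S (0 + n) = ((x * ∑' j : ℤ, g (x * j) : ℝ) : ℂ) := by
    push_cast
    congr 1
    refine tsum_congr fun n => ?_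
    rw [hS]; simp
  have hbd : ∀ n : ℤ, n ≠ 0 → ‖𝓕 S1 ((n : ℝ) / x)‖ ≤ C0 * |1 / (n : ℝ) ^ N| * x ^ N := by
    intro n hn
    have := hdec ((n : ℝ) / x)
    rw [norm_iteratedFDeriv_zero] at this
    have hn' : (0 : ℝ) < |(n : ℝ)| := abs_pos.2 (by exact_mod_cast hn)
    rw [norm_div, Real.norm_eq_abs, Real.norm_eq_abs, abs_of_pos hx, div_pow] at this
    rw [abs_div, abs_one, abs_pow]
    rw [← le_div_iff₀' (by positivity)] at this
    refine this.trans (le_of_eq ?_)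
    field_simp
  have hite : ∀ n : ℤ, ‖(if n = 0 then 0 else 𝓕 S1 ((n : ℝ) / x))‖ ≤
      C0 * |1 / (n : ℝ) ^ N| * x ^ N := by
    intro n
    by_cases hn : n = 0
    · simp [hn]; positivity
    · simpa [hn] using hbd n hn
  have hsum2 : Summable (fun n : ℤ => (if n = 0 then 0 else 𝓕 S1 ((n : ℝ) / x))) :=
    Summable.of_norm_bounded (hsum.mul_right (x ^ N)) hite
  have e2 : (x : ℂ) * ∑' n : ℤ, 𝓕 S n * fourier n ((0 : ℝ) : UnitAddCircle)
      = ∑' n : ℤ, 𝓕 S1 ((n : ℝ) / x) := by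
    rw [← tsum_mul_left]
    refine tsum_congr fun n => ?_
    rw [hF]
    simp
    field_simp
  have hsum3 : Summable (fun n : ℤ => 𝓕 S1 ((n : ℝ) / x)) := by
    refine Summable.of_norm_bounded_eventually (hsum.mul_right (x ^ N)) ?_
    have : ∀ᶠ n : ℤ in cofinite, n ≠ 0 := by
      exact (Set.finite_singleton (0 : ℤ)).subset (by intro n hn; simpa using hn)
    filter_upwards [this] with n hn using hbd n hn
  have e3 : 𝓕 S1 0 = ((∫ t, g t : ℝ) : ℂ) := by
    rw [SchwartzMap.fourier_coe, Real.fourier_real_eq_integral_exp_smul]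
    simp [hS1]
    rw [integral_complex_ofReal]
  rw [hP, e2, hsum3.tsum_eq_add_tsum_ite 0] at e1
  simp only [Int.cast_zero, zero_div, e3] at e1
  have : ((x * ∑' j : ℤ, g (x * j) - ∫ t, g t : ℝ) : ℂ) =
      ∑' n : ℤ, (if n = 0 then 0 else 𝓕 S1 ((n : ℝ) / x)) := by
    rw [Complex.ofReal_sub, ← e1]; ring
  rw [← Real.norm_eq_abs, ← Complex.norm_real, this]
  rw [← tsum_mul_right]
  exact tsum_of_norm_bounded (hsum.mul_right (x ^ N)).hasSum hite

lemma summable_comp_compact (g : ℝ → ℝ) (hc : HasCompactSupport g) (x : ℝ) (hx : 0 < x) :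
    (Function.support (fun j : ℤ => g (x * j))).Finite := by
  obtain ⟨R, hR⟩ := hc.isCompact.isBounded.subset_closedBall 0
  refine (Set.finite_Icc (-⌈R / x⌉) ⌈R / x⌉).subset ?_
  intro j hj
  have := hR (subset_tsupport _ hj)
  rw [mem_closedBall_zero_iff, Real.norm_eq_abs, abs_mul, abs_of_pos hx, ← le_div_iff₀' hx] at this
  have h2 : |(j : ℝ)| ≤ (⌈R / x⌉ : ℤ) := this.trans (Int.le_ceil _)
  have h3 : |j| ≤ ⌈R / x⌉ := by exact_mod_cast h2
  exact abs_le.1 h3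

/-- Even version, sum over `j ≥ 1`. -/
lemma riemann_nat (g : ℝ → ℝ) (hg : ContDiff ℝ (⊤ : ℕ∞) g) (hc : HasCompactSupport g)
    (he : ∀ t, g (-t) = g t) (N : ℕ) (hN : 2 ≤ N) :
    ∃ C : ℝ, 0 ≤ C ∧ ∀ x : ℝ, 0 < x →
      |x * ∑' j : ℕ, g (x * ((j : ℝ) + 1)) - ((∫ t, g t) - x * g 0) / 2| ≤ C * x ^ N := by
  obtain ⟨C, hC, h⟩ := riemann_int g hg hc N hN
  refine ⟨C, hC, fun x hx => ?_⟩
  have := h x hx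
  have hs : Summable (fun j : ℤ => g (x * j)) :=
    summable_of_hasFiniteSupport (summable_comp_compact g hc x hx)
  rw [tsum_int_eq_zero_add_two_mul_tsum_pnat (f := fun j : ℤ => g (x * j)) ?_ hs] at this
  · have e := tsum_pnat_eq_tsum_succ (f := fun n : ℕ => g (x * n))
    simp only [Int.cast_zero, mul_zero, Int.cast_natCast, nsmul_eq_mul, Nat.cast_ofNat] at this
    rw [e] at this
    push_cast at this
    set T := ∑' j : ℕ, g (x * ((j : ℝ) + 1))
    have e2 : x * T - ((∫ t, g t) - x * g 0) / 2 = (x * (g 0 + 2 * T) - ∫ t, g t) / 2 := by ring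
    rw [e2, abs_div, abs_two]
    have : 0 ≤ C * x ^ N := by positivity
    linarith
  · intro j
    simp [he]

/-- Continuous and rapidly decaying. -/
def Rap (g : ℝ → ℝ) : Prop := Continuous g ∧ ∀ n : ℕ, ∃ C : ℝ, ∀ y, |y| ^ n * |g y| ≤ C

lemma Rap.of_ge {g : ℝ → ℝ} (hc : Continuous g)
    (h : ∀ n : ℕ, 2 ≤ n → ∃ C : ℝ, ∀ y, |y| ^ n * |g y| ≤ C) : Rap g := by
  refine ⟨hc, fun n => ?_⟩
  obtain ⟨C1, h1⟩ := h (n + 2) (by omega)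
  obtain ⟨C2, h2⟩ := (isCompact_Icc (a := (-1 : ℝ)) (b := 1)).exists_bound_of_continuousOn
    (f := g) hc.continuousOn
  refine ⟨max C1 C2, fun y => ?_⟩
  by_cases hy : |y| ≤ 1
  · have := h2 y (abs_le.1 hy)
    rw [Real.norm_eq_abs] at this
    calc |y| ^ n * |g y| ≤ 1 * |g y| := by gcongr; exact pow_le_one₀ (abs_nonneg _) hy
      _ ≤ max C1 C2 := by rw [one_mul]; exact this.trans (le_max_right _ _)
  · push Not at hy
    calc |y| ^ n * |g y| ≤ |y| ^ (n + 2) * |g y| := by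
          gcongr
          · exact hy.le
          · omega
      _ ≤ max C1 C2 := (h1 y).trans (le_max_left _ _)

lemma Rap.bound {g : ℝ → ℝ} (h : Rap g) (n : ℕ) :
    ∃ C : ℝ, 0 ≤ C ∧ ∀ y, |y| ^ n * |g y| ≤ C * (1 + y ^ 2)⁻¹ := by
  obtain ⟨C1, h1⟩ := h.2 n
  obtain ⟨C2, h2⟩ := h.2 (n + 2)
  refine ⟨C1 + C2, ?_, fun y => ?_⟩
  · have a := h1 0
    have b := h2 0
    have : 0 ≤ |(0 : ℝ)| ^ n * |g 0| := by positivity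
    have : 0 ≤ |(0 : ℝ)| ^ (n + 2) * |g 0| := by positivity
    linarith
  · rw [← div_eq_mul_inv, le_div_iff₀ (by positivity)]
    have := h1 y
    have := h2 y
    rw [pow_add, sq_abs] at this
    nlinarith

lemma Rap.integrable {g : ℝ → ℝ} (h : Rap g) (n : ℕ) : Integrable (fun y => y ^ n * g y) := by
  obtain ⟨C, hC, hb⟩ := h.bound n
  refine (integrable_inv_one_add_sq.const_mul C).mono' ?_ ?_
  · exact ((continuous_id.pow n).mul h.1).aestronglyMeasurable
  · refine Eventually.of_forall fun y => ?_
    simpa [abs_mul, abs_pow] using hb y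

lemma Rap.integrable' {g : ℝ → ℝ} (h : Rap g) : Integrable g := by
  simpa using h.integrable 0

lemma Rap.sub {f g : ℝ → ℝ} (hf : Rap f) (hg : Rap g) : Rap (fun y => f y - g y) := by
  refine ⟨hf.1.sub hg.1, fun n => ?_⟩
  obtain ⟨C1, h1⟩ := hf.2 n
  obtain ⟨C2, h2⟩ := hg.2 n
  refine ⟨C1 + C2, fun y => ?_⟩
  calc |y| ^ n * |f y - g y| ≤ |y| ^ n * (|f y| + |g y|) := by gcongr; exact abs_sub _ _
    _ ≤ _ := by rw [mul_add]; exact add_le_add (h1 y) (h2 y)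

lemma wZero_eq : wZero = fun x => expNegInvGlue (1 - x ^ 2) := by
  ext x
  unfold wZero expNegInvGlue
  by_cases h : |x| < 1
  · have h1 : x ^ 2 < 1 := (sq_lt_one_iff_abs_lt_one x).2 h
    have h2 : ¬ (1 - x ^ 2 ≤ 0) := by linarith
    rw [if_pos h, if_neg h2]
    congr 1
    have : x ^ 2 - 1 ≠ 0 := by linarith
    have : 1 - x ^ 2 ≠ 0 := by linarith
    field_simp
    ring
  · have h1 : ¬ x ^ 2 < 1 := fun h' => h ((sq_lt_one_iff_abs_lt_one x).1 h')
    have h2 : (1 - x ^ 2 ≤ 0) := by linarith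
    rw [if_neg h, if_pos h2]

lemma wZero_contDiff : ContDiff ℝ (⊤ : ℕ∞) wZero := by
  rw [wZero_eq]
  exact expNegInvGlue.contDiff.comp (by fun_prop)

lemma wZero_nonneg (x : ℝ) : 0 ≤ wZero x := by
  unfold wZero; split_ifs <;> positivity

lemma wZero_supp : HasCompactSupport wZero := by
  refine HasCompactSupport.of_support_subset_isCompact (isCompact_Icc (a := (-1 : ℝ)) (b := 1)) ?_
  intro x hx
  by_contra h
  apply hx
  unfold wZero
  rw [if_neg]
  intro h'
  exact h (abs_le.1 h'.le)

lemma cZero_pos : 0 < cZero := by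
  unfold cZero
  refine wZero_contDiff.continuous.integral_pos_of_hasCompactSupport_nonneg_nonzero wZero_supp
    wZero_nonneg (x := 0) ?_
  simp [wZero]

lemma omega_contDiff : ContDiff ℝ (⊤ : ℕ∞) omegaFun := by
  unfold omegaFun
  exact contDiff_const.mul (wZero_contDiff.comp (by fun_prop))

lemma omega_eq_zero {x : ℝ} (h : x ≤ 1 / 2 ∨ 1 ≤ x) : omegaFun x = 0 := by
  unfold omegaFun wZero
  rw [if_neg, mul_zero]
  intro h'
  rw [abs_lt] at h'
  rcases h with h | h <;> linarith

lemma omega_integral : ∫ x, omegaFun x = 1 := by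
  unfold omegaFun
  rw [integral_const_mul]
  have h1 : ∫ x, wZero (4 * x - 3) = ∫ x, wZero (4 * x) := by
    rw [← integral_sub_right_eq_self (fun x => wZero (4 * x)) (3 / 4)]
    congr 1; ext x; congr 1; ring
  rw [h1, Measure.integral_comp_mul_left]
  have := cZero_pos
  change 4 / cZero * (|(4 : ℝ)⁻¹| • cZero) = 1
  rw [abs_of_pos (by norm_num), smul_eq_mul]
  field_simp

lemma even_smooth (f : ℝ → ℝ) (h1 : ∀ u, 0 < u → ContDiffAt ℝ (⊤ : ℕ∞) f u) (p : ℝ → ℝ)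
    (hp : ContDiff ℝ (⊤ : ℕ∞) p) (r : ℝ) (hr : 0 < r) (h : ∀ u, |u| < r → f |u| = p u) :
    ContDiff ℝ (⊤ : ℕ∞) (fun u => f |u|) := by
  rw [contDiff_iff_contDiffAt]
  intro u
  by_cases hu : u = 0
  · subst hu
    refine hp.contDiffAt.congr_of_eventuallyEq ?_
    have : ∀ᶠ u : ℝ in 𝓝 0, |u| < r := by
      have : ContinuousAt (fun u : ℝ => |u|) 0 := continuous_abs.continuousAt
      exact this.eventually_lt continuousAt_const (by simpa using hr)
    filter_upwards [this] with u hu using h u hu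
  · exact (h1 |u| (abs_pos.2 hu)).comp u (contDiffAt_abs hu)

lemma compact_of_bound (g : ℝ → ℝ) (R : ℝ) (h : ∀ u, R < |u| → g u = 0) : HasCompactSupport g := by
  refine HasCompactSupport.of_support_subset_isCompact (isCompact_Icc (a := -R) (b := R)) ?_
  intro x hx
  by_contra h'
  refine hx (h x ?_)
  by_contra h''
  exact h' (abs_le.1 (not_lt.1 h''))

def Kom : ℝ := ∫ v in Ioi (0 : ℝ), omegaFun v / v

def cF (x : ℝ) : ℝ := ∑' j : ℕ, omegaFun (x * ((j : ℝ) + 1)) / ((j : ℝ) + 1)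

def kF (y : ℝ) : ℝ := ∑' j : ℕ, omegaFun (|y| / ((j : ℝ) + 1)) / ((j : ℝ) + 1)

def kap (y : ℝ) : ℝ := Kom - kF y

lemma cF_bound (N : ℕ) (hN : 2 ≤ N) : ∃ C : ℝ, 0 ≤ C ∧ ∀ x : ℝ, 0 < x →
    |cF x - Kom| ≤ C * x ^ N := by
  obtain ⟨C, hC, h⟩ := riemann_nat (fun u => omegaFun |u| / |u|)
    (even_smooth (fun u => omegaFun u / u)
      (fun u hu => omega_contDiff.contDiffAt.div contDiffAt_id hu.ne') (fun _ => 0)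
      contDiff_const (1 / 2) (by norm_num)
      (fun u hu => by rw [omega_eq_zero (Or.inl hu.le), zero_div]))
    (compact_of_bound _ 1 (fun u hu => by rw [omega_eq_zero (Or.inr hu.le), zero_div]))
    (fun t => by simp only [abs_neg]) N hN
  refine ⟨C, hC, fun x hx => ?_⟩
  have := h x hx
  rw [integral_comp_abs (f := fun v => omegaFun v / v)] at this
  rw [← tsum_mul_left] at this
  have e : ∀ j : ℕ, x * (omegaFun |x * ((j : ℝ) + 1)| / |x * ((j : ℝ) + 1)|) =
      omegaFun (x * ((j : ℝ) + 1)) / ((j : ℝ) + 1) := by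
    intro j
    rw [abs_of_pos (by positivity)]
    field_simp
  simp only [e] at this
  convert! this using 3
  rw [Kom]
  simp

lemma gK_integral : ∫ u, omegaFun (|u|⁻¹) / |u| = 2 * Kom := by
  rw [integral_comp_abs (f := fun v => omegaFun (v⁻¹) / v), Kom]
  congr 1
  rw [← integral_comp_rpow_Ioi (fun v => omegaFun v / v) (p := -1) (by norm_num)]
  refine setIntegral_congr_fun measurableSet_Ioi fun x hx => ?_
  have hx : 0 < x := hx
  simp only [abs_neg, abs_one, one_mul, smul_eq_mul]
  rw [Real.rpow_neg_one, show (-1 - 1 : ℝ) = ((-2 : ℤ) : ℝ) by norm_num, Real.rpow_intCast]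
  rw [zpow_neg, zpow_ofNat]
  field_simp

lemma kF_bound (N : ℕ) (hN : 2 ≤ N) : ∃ C : ℝ, ∀ y : ℝ, |y| ^ N * |kap y| ≤ C := by
  obtain ⟨C, hC, h⟩ := riemann_nat (fun u => omegaFun (|u|⁻¹) / |u|)
    (even_smooth (fun u => omegaFun (u⁻¹) / u)
      (fun u hu => (omega_contDiff.contDiffAt.comp u (contDiffAt_id.inv hu.ne')).div
        contDiffAt_id hu.ne') (fun _ => 0)
      contDiff_const 1 one_pos
      (fun u hu => by
        rcases eq_or_ne u 0 with rfl | h0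
        · simp
        rw [omega_eq_zero (Or.inr ((one_le_inv₀ (abs_pos.2 h0)).2 hu.le)), zero_div]))
    (compact_of_bound _ 2 (fun u hu => by
        rw [omega_eq_zero (Or.inl ?_), zero_div]
        rw [one_div]
        exact inv_anti₀ (by norm_num) hu.le))
    (fun t => by simp only [abs_neg]) N hN
  refine ⟨C, fun y => ?_⟩
  rcases eq_or_ne y 0 with rfl | h0
  · rw [abs_zero, zero_pow (by omega), zero_mul]; exact hC
  have hy : 0 < |y| := abs_pos.2 h0
  have := h (|y|⁻¹) (inv_pos.2 hy)
  rw [gK_integral, ← tsum_mul_left] at this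
  have e : ∀ j : ℕ, |y|⁻¹ * (omegaFun (|(|y|⁻¹ * ((j : ℝ) + 1))|⁻¹) / |(|y|⁻¹ * ((j : ℝ) + 1))|) =
      omegaFun (|y| / ((j : ℝ) + 1)) / ((j : ℝ) + 1) := by
    intro j
    rw [abs_of_pos (by positivity : 0 < |y|⁻¹ * ((j : ℝ) + 1)), mul_inv, inv_inv, ← div_eq_mul_inv]
    field_simp
  simp only [e, abs_zero, div_zero, mul_zero, sub_zero] at this
  rw [mul_div_cancel_left₀ _ (two_ne_zero)] at this
  change |kF y - Kom| ≤ _ at this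
  rw [inv_pow, ← div_eq_mul_inv, le_div_iff₀ (by positivity), abs_sub_comm] at this
  rw [kap, mul_comm]
  exact this

lemma kF_fin (y : ℝ) (J : ℕ) (hJ : 2 * |y| ≤ J) :
    kF y = ∑ j ∈ Finset.range J, omegaFun (|y| / ((j : ℝ) + 1)) / ((j : ℝ) + 1) := by
  unfold kF
  refine tsum_eq_sum fun j hj => ?_
  rw [Finset.mem_range, not_lt] at hj
  rw [omega_eq_zero (Or.inl _), zero_div]
  rw [div_le_iff₀ (by positivity)]
  have : (J : ℝ) ≤ j := by exact_mod_cast hj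
  linarith

lemma kF_continuous : Continuous kF := by
  rw [continuous_iff_continuousAt]
  intro y
  obtain ⟨J, hJ⟩ := exists_nat_ge (2 * (|y| + 1))
  have h1 : ContinuousAt (fun y : ℝ => ∑ j ∈ Finset.range J,
      omegaFun (|y| / ((j : ℝ) + 1)) / ((j : ℝ) + 1)) y := by
    have := omega_contDiff.continuous
    refine Continuous.continuousAt ?_
    fun_prop
  refine h1.congr_of_eventuallyEq ?_
  have : ∀ᶠ z in 𝓝 y, |z| < |y| + 1 :=
    (continuous_abs.continuousAt).eventually_lt continuousAt_const (by linarith)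
  filter_upwards [this] with z hz
  exact kF_fin z J (by linarith)

lemma kap_rap : Rap kap :=
  Rap.of_ge (continuous_const.sub kF_continuous) kF_bound

lemma kap_even (y : ℝ) : kap (-y) = kap y := by
  unfold kap kF; simp only [abs_neg]

lemma hFun_eq (x y : ℝ) (hx : 0 < x) :
    hFun x y = (cF x - Kom) / x + x⁻¹ * kap (y / x) := by
  have s1 : Summable (fun j : ℕ => omegaFun (x * ((j : ℝ) + 1)) / ((j : ℝ) + 1)) := by
    obtain ⟨J, hJ⟩ := exists_nat_ge (1 / x)
    refine summable_of_ne_finset_zero (s := Finset.range J) fun j hj => ?_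
    rw [Finset.mem_range, not_lt] at hj
    rw [omega_eq_zero (Or.inr _), zero_div]
    have h3 : (J : ℝ) ≤ j := by exact_mod_cast hj
    have : 1 / x ≤ (j : ℝ) + 1 := by linarith
    rwa [div_le_iff₀' hx] at this
  have s2 : Summable (fun j : ℕ => omegaFun (|y / x| / ((j : ℝ) + 1)) / ((j : ℝ) + 1)) := by
    obtain ⟨J, hJ⟩ := exists_nat_ge (2 * |y / x|)
    refine summable_of_ne_finset_zero (s := Finset.range J) fun j hj => ?_
    rw [Finset.mem_range, not_lt] at hj
    rw [omega_eq_zero (Or.inl _), zero_div]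
    rw [div_le_iff₀ (by positivity)]
    have : (J : ℝ) ≤ j := by exact_mod_cast hj
    linarith
  have : hFun x y = x⁻¹ * (cF x - kF (y / x)) := by
    unfold hFun cF kF
    rw [← s1.tsum_sub s2, ← tsum_mul_left]
    refine tsum_congr fun j => ?_
    rw [abs_div, abs_of_pos hx, div_div]
    field_simp
  rw [this, kap]
  ring

def Wn (n : ℕ) (r : ℝ) : ℝ := ∫ s in (0 : ℝ)..r, s ^ n * omegaFun s

lemma Wn_cont (n : ℕ) : Continuous (fun s : ℝ => s ^ n * omegaFun s) :=
  (continuous_id.pow n).mul omega_contDiff.continuous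

lemma Wn_contDiff (n : ℕ) : ContDiff ℝ (⊤ : ℕ∞) (Wn n) := by
  have hd : ∀ r, HasDerivAt (Wn n) (r ^ n * omegaFun r) r := fun r =>
    intervalIntegral.integral_hasDerivAt_right ((Wn_cont n).intervalIntegrable _ _)
      (Wn_cont n).stronglyMeasurable.stronglyMeasurableAtFilter (Wn_cont n).continuousAt
  rw [contDiff_infty_iff_deriv]
  refine ⟨fun r => (hd r).differentiableAt, ?_⟩
  have : deriv (Wn n) = fun r => r ^ n * omegaFun r := by
    ext r; exact (hd r).deriv
  rw [this]
  exact (contDiff_id.pow n).mul omega_contDiff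

lemma Wn_ge (n : ℕ) (r : ℝ) (hr : 1 ≤ r) : Wn n r = Wn n 1 := by
  unfold Wn
  rw [← intervalIntegral.integral_add_adjacent_intervals
    ((Wn_cont n).intervalIntegrable 0 1) ((Wn_cont n).intervalIntegrable 1 r)]
  have : ∫ s in (1 : ℝ)..r, s ^ n * omegaFun s = ∫ s in (1 : ℝ)..r, 0 := by
    refine intervalIntegral.integral_congr fun s hs => ?_
    rw [uIcc_of_le hr] at hs
    rw [omega_eq_zero (Or.inr hs.1), mul_zero]
  rw [this]; simp

lemma Wn_le (n : ℕ) (r : ℝ) (h0 : 0 ≤ r) (hr : r ≤ 1 / 2) : Wn n r = 0 := by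
  unfold Wn
  have : ∫ s in (0 : ℝ)..r, s ^ n * omegaFun s = ∫ s in (0 : ℝ)..r, 0 := by
    refine intervalIntegral.integral_congr fun s hs => ?_
    rw [uIcc_of_le h0] at hs
    rw [omega_eq_zero (Or.inl (hs.2.trans hr)), mul_zero]
  rw [this]; simp

lemma Wn_zero_one : Wn 0 1 = 1 := by
  refine Eq.trans ?_ omega_integral
  unfold Wn
  rw [intervalIntegral.integral_of_le zero_le_one]
  simp only [pow_zero, one_mul]
  refine setIntegral_eq_integral_of_forall_compl_eq_zero fun x hx => ?_
  refine omega_eq_zero ?_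
  by_contra h
  push Not at h
  exact hx ⟨by linarith [h.1], h.2.le⟩

def fn (n : ℕ) (u : ℝ) : ℝ := if u < 1 then Wn n 1 * u ^ n else u ^ n * Wn n u⁻¹

lemma fn_pos (n : ℕ) (u : ℝ) (hu : 0 < u) : fn n u = u ^ n * Wn n u⁻¹ := by
  unfold fn
  split_ifs with h
  · rw [Wn_ge n u⁻¹ ((one_le_inv₀ hu).2 h.le), mul_comm]
  · rfl

lemma kap_partial (n : ℕ) (Y : ℝ) (hY : 0 < Y) :
    ∫ y in (0 : ℝ)..Y, y ^ n * kap y =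
      Kom * Y ^ (n + 1) / (n + 1) - Y ^ n * ∑' j : ℕ, fn n (|Y⁻¹ * ((j : ℝ) + 1)|) := by
  obtain ⟨J, hJ⟩ := exists_nat_ge (2 * Y)
  have e1 : ∀ j : ℕ, Y ^ n * fn n (|Y⁻¹ * ((j : ℝ) + 1)|) =
      ((j : ℝ) + 1) ^ n * Wn n (Y / ((j : ℝ) + 1)) := by
    intro j
    have : 0 < Y⁻¹ * ((j : ℝ) + 1) := by positivity
    rw [abs_of_pos this, fn_pos n _ this, mul_inv, inv_inv, ← div_eq_mul_inv, ← mul_assoc,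
      ← mul_pow]
    congr 2
    field_simp
  rw [← tsum_mul_left]
  simp only [e1]
  rw [tsum_eq_sum (s := Finset.range J)]
  swap
  · intro j hj
    rw [Finset.mem_range, not_lt] at hj
    rw [Wn_le, mul_zero]
    · positivity
    · rw [div_le_iff₀ (by positivity)]
      have : (J : ℝ) ≤ j := by exact_mod_cast hj
      linarith
  have e2 : ∫ y in (0 : ℝ)..Y, y ^ n * kap y = ∫ y in (0 : ℝ)..Y, (Kom * y ^ n -
      ∑ j ∈ Finset.range J, ((j : ℝ) + 1) ^ n / ((j : ℝ) + 1) *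
        ((y / ((j : ℝ) + 1)) ^ n * omegaFun (y / ((j : ℝ) + 1)))) := by
    refine intervalIntegral.integral_congr fun y hy => ?_
    rw [uIcc_of_le hY.le] at hy
    rw [kap, kF_fin y J (by rw [abs_of_nonneg hy.1]; linarith [hy.2]), mul_sub, mul_comm (y ^ n) Kom,
      Finset.mul_sum, abs_of_nonneg hy.1]
    congr 1
    refine Finset.sum_congr rfl fun j _ => ?_
    rw [div_pow]
    field_simp
  rw [e2, intervalIntegral.integral_sub, intervalIntegral.integral_finsetSum,
    intervalIntegral.integral_const_mul, integral_pow]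
  · congr 1
    · simp; ring
    · refine Finset.sum_congr rfl fun j _ => ?_
      have hj : (j : ℝ) + 1 ≠ 0 := by positivity
      rw [intervalIntegral.integral_const_mul,
        intervalIntegral.integral_comp_div (fun s => s ^ n * omegaFun s) hj, Wn, zero_div,
        smul_eq_mul]
      field_simp
  · intro j _
    refine Continuous.intervalIntegrable ?_ _ _
    have := (Wn_cont n).comp (continuous_id.div_const ((j : ℝ) + 1))
    exact continuous_const.mul this
  · exact (continuous_const.mul (continuous_id.pow n)).intervalIntegrable _ _
  · refine Continuous.intervalIntegrable ?_ _ _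
    refine continuous_finsetSum _ fun j _ => ?_
    have := (Wn_cont n).comp (continuous_id.div_const ((j : ℝ) + 1))
    exact continuous_const.mul this

lemma kap_half_moment (n : ℕ) (hn : Even n) :
    ∫ y in Ioi (0 : ℝ), y ^ n * kap y = fn n 0 / 2 := by
  obtain ⟨C, hC, h⟩ := riemann_nat (fun u => fn n |u|)
    (even_smooth (fn n)
      (fun u hu => by
        have h1 : ContDiffAt ℝ (⊤ : ℕ∞) (fun u => u ^ n * Wn n u⁻¹) u :=
          (contDiffAt_id.pow n).mul ((Wn_contDiff n).contDiffAt.comp u (contDiffAt_id.inv hu.ne'))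
        refine h1.congr_of_eventuallyEq ?_
        filter_upwards [Ioi_mem_nhds hu] with v hv using fn_pos n v hv)
      (fun u => Wn n 1 * u ^ n)
      (contDiff_const.mul (contDiff_id.pow n)) 1 one_pos
      (fun u hu => by rw [fn, if_pos hu, hn.pow_abs]))
    (compact_of_bound _ 2 (fun u hu => by
      rw [fn_pos n _ (by linarith), Wn_le, mul_zero]
      · positivity
      · rw [one_div]
        exact inv_anti₀ (by norm_num) hu.le))
    (fun t => by simp only [abs_neg]) (n + 2) (by omega)
  set I := ∫ t, fn n |t| with hI
  set a := Kom / (n + 1) - I / 2 with ha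
  have hlim : Tendsto (fun Y : ℝ => ∫ y in (0 : ℝ)..Y, y ^ n * kap y) atTop
      (𝓝 (∫ y in Ioi (0 : ℝ), y ^ n * kap y)) :=
    intervalIntegral_tendsto_integral_Ioi 0 (kap_rap.integrable n).integrableOn tendsto_id
  have h0 : ∀ Y : ℝ, Y ^ n * fn n 0 = fn n 0 := by
    intro Y
    rcases Nat.eq_zero_or_pos n with rfl | hp
    · simp
    · simp [fn, zero_pow hp.ne']
  have hest : ∀ Y : ℝ, 0 < Y →
      |(∫ y in (0 : ℝ)..Y, y ^ n * kap y) - (a * Y ^ (n + 1) + fn n 0 / 2)| ≤ C * Y⁻¹ := by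
    intro Y hY
    have := h Y⁻¹ (inv_pos.2 hY)
    rw [kap_partial n Y hY]
    simp only [abs_zero] at this
    set T := ∑' j : ℕ, fn n (|Y⁻¹ * ((j : ℝ) + 1)|)
    have e : Kom * Y ^ (n + 1) / (n + 1) - Y ^ n * T - (a * Y ^ (n + 1) + fn n 0 / 2) =
        - (Y ^ (n + 1) * (Y⁻¹ * T - (I - Y⁻¹ * fn n 0) / 2)) := by
      rw [ha]
      have e3 : Y ^ (n + 1) * (Y⁻¹ * T - (I - Y⁻¹ * fn n 0) / 2) =
        Y ^ n * T - Y ^ (n + 1) * I / 2 + Y ^ n * fn n 0 / 2 := by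
        rw [pow_succ]; field_simp; ring
      rw [e3, h0]
      ring
    rw [e, abs_neg, abs_mul, abs_of_pos (by positivity : 0 < Y ^ (n + 1))]
    calc _ ≤ Y ^ (n + 1) * (C * Y⁻¹ ^ (n + 2)) := by gcongr
      _ = C * Y⁻¹ := by
        rw [inv_pow, pow_succ Y (n + 1)]; field_simp
  have hz : Tendsto (fun Y : ℝ => C * Y⁻¹) atTop (𝓝 0) := by
    simpa using tendsto_inv_atTop_zero.const_mul C
  have hdiff : Tendsto (fun Y : ℝ => (∫ y in (0 : ℝ)..Y, y ^ n * kap y) -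
      (a * Y ^ (n + 1) + fn n 0 / 2)) atTop (𝓝 0) := by
    refine squeeze_zero_norm' ?_ hz
    filter_upwards [eventually_gt_atTop 0] with Y hY using hest Y hY
  have hA : Tendsto (fun Y : ℝ => a * Y ^ (n + 1)) atTop
      (𝓝 ((∫ y in Ioi (0 : ℝ), y ^ n * kap y) - 0 - fn n 0 / 2)) := by
    have := (hlim.sub hdiff).sub_const (fn n 0 / 2)
    refine this.congr fun Y => ?_
    ring
  have ha0 : a = 0 := by
    have hi : Tendsto (fun Y : ℝ => (Y ^ (n + 1))⁻¹) atTop (𝓝 0) :=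
      tendsto_inv_atTop_zero.comp (tendsto_pow_atTop (by omega))
    have := hA.mul hi
    rw [mul_zero] at this
    refine tendsto_nhds_unique (Tendsto.congr' ?_ tendsto_const_nhds) this
    filter_upwards [eventually_gt_atTop 0] with Y hY
    field_simp
  rw [ha0] at hA
  simp only [zero_mul] at hA
  have := tendsto_nhds_unique hA tendsto_const_nhds
  linarith

lemma kap_moment_even (n : ℕ) (hn : Even n) : ∫ y, y ^ n * kap y = fn n 0 := by
  have : ∫ y, y ^ n * kap y = ∫ y, (fun t => t ^ n * kap t) |y| := by
    congr 1; ext y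
    simp only [hn.pow_abs]
    congr 1
    rcases abs_choice y with h | h <;> rw [h]
    rw [kap_even]
  rw [this, integral_comp_abs (f := fun t => t ^ n * kap t), kap_half_moment n hn]
  ring

lemma kap_integral : ∫ y, kap y = 1 := by
  have := kap_moment_even 0 (by simp)
  simp [fn, Wn_zero_one] at this
  exact this

lemma kap_moment (n : ℕ) (hn : 1 ≤ n) : ∫ y, y ^ n * kap y = 0 := by
  rcases Nat.even_or_odd n with h | h
  · rw [kap_moment_even n h]
    simp [fn, zero_pow (show n ≠ 0 by omega)]
  · have := integral_neg_eq_self (fun y => y ^ n * kap y) volume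
    simp only [kap_even, h.neg_pow, neg_mul, integral_neg] at this
    linarith

lemma rap_antideriv (g : ℝ → ℝ) (hg : Rap g) (M : ℕ)
    (hm : ∀ i, i < M + 1 → ∫ y, y ^ i * g y = 0) :
    ∃ g1 : ℝ → ℝ, Rap g1 ∧ (∀ y, HasDerivAt g1 (g y) y) ∧ ∀ i, i < M → ∫ y, y ^ i * g1 y = 0 := by
  have hi : Integrable g := hg.integrable'
  have h0 : ∫ y, g y = 0 := by simpa using hm 0 (by omega)
  let g1 : ℝ → ℝ := fun y => ∫ s in Iic y, g s
  have hder : ∀ y, HasDerivAt g1 (g y) y := by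
    intro y
    have e : g1 = fun y => (∫ s in Iic (0 : ℝ), g s) + ∫ s in (0 : ℝ)..y, g s := by
      ext y
      rw [← intervalIntegral.integral_Iic_sub_Iic hi.integrableOn hi.integrableOn]
      ring
    rw [e]
    have := intervalIntegral.integral_hasDerivAt_right (hg.1.intervalIntegrable 0 y)
      hg.1.stronglyMeasurable.stronglyMeasurableAtFilter hg.1.continuousAt
    exact this.const_add _
  have hcont : Continuous g1 := continuous_iff_continuousAt.2 fun y => (hder y).continuousAt
  have hrap : Rap g1 := by
    refine ⟨hcont, fun n => ⟨∫ s, |s| ^ n * |g s|, fun y => ?_⟩⟩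
    have hIg : Integrable (fun s => |s| ^ n * |g s|) := by
      have := (hg.integrable n).abs
      simpa [abs_mul, abs_pow] using this
    have main : ∀ S : Set ℝ, MeasurableSet S → (∀ s ∈ S, |y| ≤ |s|) →
        |y| ^ n * |∫ s in S, g s| ≤ ∫ s, |s| ^ n * |g s| := by
      intro S hS hy
      calc |y| ^ n * |∫ s in S, g s| ≤ |y| ^ n * ∫ s in S, |g s| := by
            gcongr
            exact abs_integral_le_integral_abs
        _ = ∫ s in S, |y| ^ n * |g s| := by rw [integral_const_mul]
        _ ≤ ∫ s in S, |s| ^ n * |g s| := by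
            refine setIntegral_mono_on (hi.abs.const_mul _).integrableOn hIg.integrableOn hS ?_
            intro s hs
            have := hy s hs
            gcongr
        _ ≤ ∫ s, |s| ^ n * |g s| :=
            setIntegral_le_integral hIg (Eventually.of_forall fun s => by positivity)
    rcases le_total y 0 with hy | hy
    · refine main (Iic y) measurableSet_Iic fun s hs => ?_
      have hs : s ≤ y := hs
      rw [abs_of_nonpos hy, abs_of_nonpos (hs.trans hy)]
      linarith
    · have e : g1 y = - ∫ s in Ioi y, g s := by
        have := intervalIntegral.integral_Iic_add_Ioi (b := y) hi.integrableOn hi.integrableOn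
        rw [h0] at this
        change (∫ s in Iic y, g s) = _
        linarith
      rw [e, abs_neg]
      refine main (Ioi y) measurableSet_Ioi fun s hs => ?_
      have hs : y < s := hs
      rw [abs_of_nonneg hy, abs_of_nonneg (hy.trans hs.le)]
      exact hs.le
  refine ⟨g1, hrap, hder, fun i hiM => ?_⟩
  have := integral_mul_deriv_eq_deriv_mul_of_integrable
    (u := fun y : ℝ => y ^ (i + 1)) (u' := fun y => ((i + 1 : ℕ) : ℝ) * y ^ i)
    (v := g1) (v' := g) (fun y _ => by simpa using hasDerivAt_pow (i + 1) y) (fun y _ => hder y)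
    (hg.integrable (i + 1))
    (by simpa [mul_assoc, Pi.mul_def] using (hrap.integrable i).const_mul ((i + 1 : ℕ) : ℝ))
    (hrap.integrable (i + 1))
  rw [hm (i + 1) (by omega)] at this
  simp only [mul_assoc] at this
  rw [integral_const_mul] at this
  have h2 : ((i + 1 : ℕ) : ℝ) ≠ 0 := by positivity
  have h3 : ((i + 1 : ℕ) : ℝ) * ∫ y, y ^ i * g1 y = 0 := by linarith
  exact (mul_eq_zero.1 h3).resolve_left h2

/-- The tent function. -/
def tent (y : ℝ) : ℝ := max 0 (1 - |y|)

lemma tent_rap : Rap tent := by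
  refine Rap.of_ge (by unfold tent; fun_prop) fun n hn => ⟨1, fun y => ?_⟩
  unfold tent
  rcases le_total |y| 1 with h | h
  · rw [max_eq_right (by linarith), abs_of_nonneg (a := 1 - |y|) (by linarith)]
    have : |y| ^ n ≤ 1 := pow_le_one₀ (abs_nonneg _) h
    have := abs_nonneg y
    have : 0 ≤ |y| ^ n := by positivity
    nlinarith
  · rw [max_eq_left (by linarith)]
    simp

lemma tent_integral : ∫ y, tent y = 1 := by
  unfold tent
  rw [integral_comp_abs (f := fun t => max 0 (1 - t))]
  have : ∫ x in Ioi (0 : ℝ), max 0 (1 - x) = ∫ x in Ioc (0 : ℝ) 1, (1 - x) := by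
    rw [← integral_indicator measurableSet_Ioi, ← integral_indicator measurableSet_Ioc]
    congr 1
    ext x
    by_cases h1 : 0 < x <;> by_cases h2 : x ≤ 1 <;> simp [indicator, h1, h2]
    linarith
  rw [this, ← intervalIntegral.integral_of_le zero_le_one]
  rw [intervalIntegral.integral_sub (by simp) (by simp)]
  simp
  norm_num

/-- `κ(y) - 2 κ(2y)`. -/
def kdiff (y : ℝ) : ℝ := kap y - 2 * kap (2 * y)

lemma kap2_rap : Rap (fun y => 2 * kap (2 * y)) := by
  refine ⟨continuous_const.mul (kap_rap.1.comp (by fun_prop)), fun n => ?_⟩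
  obtain ⟨C, h⟩ := kap_rap.2 n
  refine ⟨2 * C, fun y => ?_⟩
  have := h (2 * y)
  rw [abs_mul, abs_two] at this ⊢
  have h2 : |y| ^ n ≤ (2 * |y|) ^ n := by
    have := abs_nonneg y
    gcongr; linarith
  have : |y| ^ n * |kap (2 * y)| ≤ (2 * |y|) ^ n * |kap (2 * y)| := by gcongr
  linarith

lemma kdiff_rap : Rap kdiff := kap_rap.sub kap2_rap

lemma kdiff_moment (i : ℕ) : ∫ y, y ^ i * kdiff y = 0 := by
  have e : ∫ y, y ^ i * (2 * kap (2 * y)) = (2 ^ i)⁻¹ * ∫ y, y ^ i * kap y := by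
    have := Measure.integral_comp_mul_left (fun y : ℝ => y ^ i * kap y) 2
    have e2 : ∫ y : ℝ, y ^ i * (2 * kap (2 * y)) =
        ∫ y : ℝ, ((2 ^ i)⁻¹ * 2) * ((2 * y) ^ i * kap (2 * y)) := by
      congr 1; ext y; rw [mul_pow]; field_simp
    rw [e2, integral_const_mul, this, abs_of_pos (by norm_num), smul_eq_mul]
    ring
  have e3 : ∫ y, y ^ i * kdiff y = (∫ y, y ^ i * kap y) - ∫ y, y ^ i * (2 * kap (2 * y)) := by
    rw [← integral_sub (kap_rap.integrable i) (kap2_rap.integrable i)]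
    congr 1; ext y; rw [kdiff]; ring
  rw [e3, e]
  rcases Nat.eq_zero_or_pos i with rfl | hi
  · simp
  · rw [kap_moment i hi]; simp

def ktent (y : ℝ) : ℝ := kap y - tent y

lemma ktent_rap : Rap ktent := kap_rap.sub tent_rap

lemma ktent_moment (i : ℕ) (hi : i < 1) : ∫ y, y ^ i * ktent y = 0 := by
  obtain rfl : i = 0 := by omega
  simp only [pow_zero, one_mul, ktent]
  rw [integral_sub kap_rap.integrable' tent_rap.integrable', kap_integral, tent_integral, sub_self]

def Qs {d : ℕ} (z : Fin d → ℝ) : ℝ := ∑ i, z i ^ 2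

def th {d : ℕ} (z : Fin d → ℝ) : ℝ := Real.sqrt (1 + (Qs z)⁻¹)

def dj {d : ℕ} (j : Fin d) (f : (Fin d → ℝ) → ℝ) (z : Fin d → ℝ) : ℝ :=
  fderiv ℝ f z (Pi.single j 1)

def Bd {ι : Type} {d : ℕ} (W : ι → (Fin d → ℝ) → ℝ) (p : ℕ) (v : ι → (Fin d → ℝ) → ℝ) : Prop :=
  ∃ C : ℝ, 0 ≤ C ∧ ∀ i z, z ≠ 0 → |v i z| ≤ C * W i z * th z ^ p

def Cls {ι : Type} {d : ℕ} (W : ι → (Fin d → ℝ) → ℝ) :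
    ℕ → ℕ → (ι → (Fin d → ℝ) → ℝ) → Prop
  | 0, p, v => Bd W p v ∧ ∀ i, ContinuousOn (v i) {0}ᶜ
  | n + 1, p, v => Bd W p v ∧ (∀ i z, z ≠ 0 → DifferentiableAt ℝ (v i) z) ∧
      ∀ j, Cls W n (p + 1) (fun i => dj j (v i))

section
variable {ι : Type} {d : ℕ} {W W' : ι → (Fin d → ℝ) → ℝ}

lemma th_ge_one (z : Fin d → ℝ) : 1 ≤ th z := by
  unfold th
  rw [Real.one_le_sqrt]
  have : 0 ≤ Qs z := Finset.sum_nonneg fun i _ => sq_nonneg _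
  have : 0 ≤ (Qs z)⁻¹ := by positivity
  linarith

lemma Qs_nonneg (z : Fin d → ℝ) : 0 ≤ Qs z := Finset.sum_nonneg fun i _ => sq_nonneg _

lemma Qs_pos {z : Fin d → ℝ} (hz : z ≠ 0) : 0 < Qs z := by
  obtain ⟨i, hi⟩ := Function.ne_iff.1 hz
  refine Finset.sum_pos' (fun i _ => sq_nonneg _) ⟨i, Finset.mem_univ _, ?_⟩
  have : z i ≠ 0 := hi
  positivity

lemma th_sq (z : Fin d → ℝ) : th z ^ 2 = 1 + (Qs z)⁻¹ := by
  unfold th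
  have := Qs_nonneg z
  rw [Real.sq_sqrt (by positivity)]

lemma Cls.bd {n p : ℕ} {v : ι → (Fin d → ℝ) → ℝ} (h : Cls W n p v) : Bd W p v := by
  cases n with
  | zero => exact h.1
  | succ n => exact h.1

lemma Cls.contOn {n p : ℕ} {v : ι → (Fin d → ℝ) → ℝ} (h : Cls W n p v) (i : ι) :
    ContinuousOn (v i) {0}ᶜ := by
  cases n with
  | zero => exact h.2 i
  | succ n => exact fun z hz => (h.2.1 i z hz).continuousAt.continuousWithinAt

lemma Cls.mono_n {n p : ℕ} {v : ι → (Fin d → ℝ) → ℝ} (h : Cls W (n + 1) p v) : Cls W n p v := by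
  induction n generalizing p v with
  | zero => exact ⟨h.bd, h.contOn⟩
  | succ n ih => exact ⟨h.bd, h.2.1, fun j => ih (h.2.2 j)⟩

lemma dj_congr {f g : (Fin d → ℝ) → ℝ} (h : ∀ z, z ≠ 0 → f z = g z) (j : Fin d) (z : Fin d → ℝ)
    (hz : z ≠ 0) : dj j f z = dj j g z := by
  unfold dj
  have : f =ᶠ[𝓝 z] g := by
    filter_upwards [isOpen_compl_singleton.mem_nhds hz] with y hy using h y hy
  rw [this.fderiv_eq]

lemma Cls.congr {n p : ℕ} {v v' : ι → (Fin d → ℝ) → ℝ} (h : Cls W n p v)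
    (e : ∀ i z, z ≠ 0 → v i z = v' i z) : Cls W n p v' := by
  have hb : Bd W p v' := by
    obtain ⟨C, hC, hb⟩ := h.bd
    exact ⟨C, hC, fun i z hz => by rw [← e i z hz]; exact hb i z hz⟩
  induction n generalizing p v v' with
  | zero => exact ⟨hb, fun i => (h.2 i).congr fun z hz => (e i z hz).symm⟩
  | succ n ih =>
    refine ⟨hb, fun i z hz => ?_, fun j => ?_⟩
    · refine (h.2.1 i z hz).congr_of_eventuallyEq ?_
      filter_upwards [isOpen_compl_singleton.mem_nhds hz] with y hy using (e i y hy).symm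
    · have e' : ∀ i z, z ≠ 0 → dj j (v i) z = dj j (v' i) z :=
        fun i z hz => dj_congr (e i) j z hz
      refine ih (h.2.2 j) e' ?_
      obtain ⟨C, hC, hb⟩ := (h.2.2 j).bd
      exact ⟨C, hC, fun i z hz => by
        have := hb i z hz
        simp only [e' i z hz] at this
        exact this⟩

lemma Bd.add {p : ℕ} {v v' : ι → (Fin d → ℝ) → ℝ} (h : Bd W p v) (h' : Bd W p v') :
    Bd W p (fun i z => v i z + v' i z) := by
  obtain ⟨C, hC, hb⟩ := h
  obtain ⟨C', hC', hb'⟩ := h'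
  refine ⟨C + C', by positivity, fun i z hz => (abs_add_le _ _).trans ?_⟩
  have := hb i z hz
  have := hb' i z hz
  rw [add_mul, add_mul]
  linarith

lemma Cls.add {n p : ℕ} {v v' : ι → (Fin d → ℝ) → ℝ} (h : Cls W n p v) (h' : Cls W n p v') :
    Cls W n p (fun i z => v i z + v' i z) := by
  induction n generalizing p v v' with
  | zero => exact ⟨h.bd.add h'.bd, fun i => (h.2 i).add (h'.2 i)⟩
  | succ n ih =>
    refine ⟨h.bd.add h'.bd, fun i z hz => (h.2.1 i z hz).add (h'.2.1 i z hz), fun j => ?_⟩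
    refine (ih (h.2.2 j) (h'.2.2 j)).congr fun i z hz => ?_
    unfold dj
    rw [fderiv_fun_add (h.2.1 i z hz) (h'.2.1 i z hz)]
    rfl

lemma Bd.const_mul {p : ℕ} {v : ι → (Fin d → ℝ) → ℝ} (h : Bd W p v) (c : ℝ) :
    Bd W p (fun i z => c * v i z) := by
  obtain ⟨C, hC, hb⟩ := h
  refine ⟨|c| * C, by positivity, fun i z hz => ?_⟩
  rw [abs_mul, mul_assoc, mul_assoc, ← mul_assoc C]
  have := hb i z hz
  gcongr

lemma Cls.const_mul {n p : ℕ} {v : ι → (Fin d → ℝ) → ℝ} (h : Cls W n p v) (c : ℝ) :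
    Cls W n p (fun i z => c * v i z) := by
  induction n generalizing p v with
  | zero => exact ⟨h.bd.const_mul c, fun i => (h.2 i).const_smul c⟩
  | succ n ih =>
    refine ⟨h.bd.const_mul c, fun i z hz => (h.2.1 i z hz).const_mul c, fun j => ?_⟩
    refine (ih (h.2.2 j)).congr fun i z hz => ?_
    unfold dj
    rw [fderiv_const_mul (h.2.1 i z hz)]
    rfl

lemma Cls.zero (hW : ∀ i z, 0 ≤ W i z) (n p : ℕ) : Cls W n p (fun _ _ => 0) := by
  have hb : ∀ p, Bd W p (fun _ _ => 0) := fun p => ⟨0, le_rfl, fun i z _ => by simp⟩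
  induction n generalizing p with
  | zero => exact ⟨hb p, fun i => continuousOn_const⟩
  | succ n ih =>
    refine ⟨hb p, fun i z hz => differentiableAt_const _, fun j => ?_⟩
    refine (ih (p + 1)).congr fun i z hz => ?_
    simp [dj]

lemma Cls.sum {κ : Type} (s : Finset κ) (hW : ∀ i z, 0 ≤ W i z) {n p : ℕ}
    {v : κ → ι → (Fin d → ℝ) → ℝ} (h : ∀ k, Cls W n p (v k)) :
    Cls W n p (fun i z => ∑ k ∈ s, v k i z) := by
  induction s using Finset.induction_on with
  | empty => simpa using Cls.zero hW n p
  | insert k s hk ih =>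
    simp only [Finset.sum_insert hk]
    exact (h k).add ih

lemma Bd.mul {p r : ℕ} {v b : ι → (Fin d → ℝ) → ℝ} (h : Bd W p v) (h' : Bd W' r b) :
    Bd (fun i z => W i z * W' i z) (p + r) (fun i z => v i z * b i z) := by
  obtain ⟨C, hC, hb⟩ := h
  obtain ⟨C', hC', hb'⟩ := h'
  refine ⟨C * C', by positivity, fun i z hz => ?_⟩
  rw [abs_mul]
  calc |v i z| * |b i z| ≤ (C * W i z * th z ^ p) * (C' * W' i z * th z ^ r) :=
        mul_le_mul (hb i z hz) (hb' i z hz) (abs_nonneg _) ((abs_nonneg _).trans (hb i z hz))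
    _ = _ := by rw [pow_add]; ring

lemma Cls.mul {n p r : ℕ} {v b : ι → (Fin d → ℝ) → ℝ} (h : Cls W n p v) (h' : Cls W' n r b) :
    Cls (fun i z => W i z * W' i z) n (p + r) (fun i z => v i z * b i z) := by
  induction n generalizing p r v b with
  | zero => exact ⟨h.bd.mul h'.bd, fun i => (h.2 i).mul (h'.2 i)⟩
  | succ n ih =>
    refine ⟨h.bd.mul h'.bd, fun i z hz => (h.2.1 i z hz).mul (h'.2.1 i z hz), fun j => ?_⟩
    have h1 := ih (h.2.2 j) h'.mono_n
    have h2 := ih h.mono_n (h'.2.2 j)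
    rw [show p + 1 + r = p + r + 1 by ring] at h1
    rw [show p + (r + 1) = p + r + 1 by ring] at h2
    refine (h1.add h2).congr fun i z hz => ?_
    unfold dj
    rw [fderiv_fun_mul (h.2.1 i z hz) (h'.2.1 i z hz)]
    simp
    ring

lemma Qs_hasFDerivAt (z : Fin d → ℝ) :
    HasFDerivAt (Qs (d := d)) (∑ i, (2 * z i) • ContinuousLinearMap.proj (R := ℝ)
      (φ := fun _ : Fin d => ℝ) i) z := by
  unfold Qs
  refine HasFDerivAt.fun_sum fun i _ => ?_
  have := (hasDerivAt_pow 2 (z i)).comp_hasFDerivAt z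
    (ContinuousLinearMap.proj (R := ℝ) (φ := fun _ : Fin d => ℝ) i).hasFDerivAt
  change HasFDerivAt (fun z : Fin d → ℝ => z i ^ 2) _ z at this
  simpa using this

lemma dj_comp_Qs (f : ℝ → ℝ) (f' : ℝ) (z : Fin d → ℝ) (hf : HasDerivAt f f' (Qs z)) (j : Fin d) :
    dj j (fun z => f (Qs z)) z = f' * (2 * z j) := by
  unfold dj
  have := hf.comp_hasFDerivAt z (Qs_hasFDerivAt z)
  have e := HasFDerivAt.fderiv this
  change fderiv ℝ (fun z => f (Qs z)) z = _ at e
  rw [e]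
  simp [Pi.single_apply]

lemma coord_differentiableAt (i : Fin d) (z : Fin d → ℝ) :
    DifferentiableAt ℝ (fun z : Fin d → ℝ => z i) z := by fun_prop

lemma dj_coord (i j : Fin d) (z : Fin d → ℝ) :
    dj j (fun z : Fin d → ℝ => z i) z = if i = j then 1 else 0 := by
  unfold dj
  have := (ContinuousLinearMap.proj (R := ℝ) (φ := fun _ : Fin d => ℝ) i).fderiv (x := z)
  change fderiv ℝ (fun z : Fin d → ℝ => z i) z = _ at this
  rw [this]
  simp [Pi.single_apply]

lemma Qs_inv_diff {z : Fin d → ℝ} (hz : z ≠ 0) : DifferentiableAt ℝ (fun z => (Qs z)⁻¹) z :=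
  (Qs_hasFDerivAt z).differentiableAt.inv (Qs_pos hz).ne'

lemma coord_sq_le (z : Fin d → ℝ) (i : Fin d) : z i ^ 2 ≤ Qs z :=
  Finset.single_le_sum (f := fun i => z i ^ 2) (fun i _ => sq_nonneg _) (Finset.mem_univ i)

lemma bd_a : Bd (ι := ι) (d := d) (fun _ _ => 1) 2 (fun _ z => (Qs z)⁻¹) := by
  refine ⟨1, zero_le_one, fun i z hz => ?_⟩
  have := Qs_pos hz
  rw [th_sq, abs_of_pos (by positivity)]
  linarith

lemma bd_c (k : Fin d) : Bd (ι := ι) (d := d) (fun _ _ => 1) 1 (fun _ z => z k * (Qs z)⁻¹) := by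
  refine ⟨1, zero_le_one, fun i z hz => ?_⟩
  have hq := Qs_pos hz
  rw [one_mul, one_mul, pow_one]
  unfold th
  refine Real.abs_le_sqrt ?_
  have := coord_sq_le z k
  rw [mul_pow]
  calc z k ^ 2 * (Qs z)⁻¹ ^ 2 ≤ Qs z * (Qs z)⁻¹ ^ 2 := by gcongr
    _ = (Qs z)⁻¹ := by field_simp
    _ ≤ 1 + (Qs z)⁻¹ := by linarith

lemma cls_ac (n : ℕ) : Cls (ι := ι) (d := d) (fun _ _ => 1) n 2 (fun _ z => (Qs z)⁻¹) ∧
    ∀ k : Fin d, Cls (ι := ι) (d := d) (fun _ _ => 1) n 1 (fun _ z => z k * (Qs z)⁻¹) := by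
  have dQ : ∀ (j : Fin d) (z : Fin d → ℝ), z ≠ 0 → dj j (fun z => (Qs z)⁻¹) z =
      -2 * ((Qs z)⁻¹ * (z j * (Qs z)⁻¹)) := by
    intro j z hz
    rw [dj_comp_Qs (fun q => q⁻¹) _ z (hasDerivAt_inv (Qs_pos hz).ne') j]
    have := (Qs_pos hz).ne'
    field_simp
  have dd : ∀ (k : Fin d) (z : Fin d → ℝ), z ≠ 0 →
      DifferentiableAt ℝ (fun z : Fin d → ℝ => z k * (Qs z)⁻¹) z :=
    fun k z hz => (coord_differentiableAt k z).mul (Qs_inv_diff hz)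
  induction n with
  | zero =>
    refine ⟨⟨bd_a, fun i z hz => (Qs_inv_diff hz).continuousAt.continuousWithinAt⟩, fun k =>
      ⟨bd_c k, fun i z hz => (dd k z hz).continuousAt.continuousWithinAt⟩⟩
  | succ n ih =>
    obtain ⟨iha, ihc⟩ := ih
    refine ⟨⟨bd_a, fun i z hz => Qs_inv_diff hz, fun j => ?_⟩, fun k =>
      ⟨bd_c k, fun i z hz => dd k z hz, fun j => ?_⟩⟩
    · have := (iha.mul (ihc j)).const_mul (-2)
      simp only [mul_one] at this
      exact this.congr fun i z hz => (dQ j z hz).symm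
    · have h1 := iha.const_mul (if k = j then 1 else 0)
      have h2 := ((ihc k).mul (ihc j)).const_mul (-2)
      simp only [mul_one] at h2
      refine (h1.add h2).congr fun i z hz => ?_
      have e : dj j (fun z : Fin d → ℝ => z k * (Qs z)⁻¹) z =
          z k * dj j (fun z => (Qs z)⁻¹) z + (Qs z)⁻¹ * dj j (fun z : Fin d → ℝ => z k) z := by
        unfold dj
        rw [fderiv_fun_mul (coord_differentiableAt k z) (Qs_inv_diff hz)]
        simp
      rw [e, dQ j z hz, dj_coord]
      ring

lemma cls_of_contDiff (hW : ∀ i z, 0 ≤ W i z) (n p : ℕ) (v : ι → (Fin d → ℝ) → ℝ)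
    (hc : ∀ i, ContDiff ℝ n (v i))
    (hb : ∃ C : ℝ, 0 ≤ C ∧ ∀ k, k ≤ n → ∀ i z, ‖iteratedFDeriv ℝ k (v i) z‖ ≤ C * W i z) :
    Cls W n p v := by
  have bd : Bd W p v := by
    obtain ⟨C, hC, h⟩ := hb
    refine ⟨C, hC, fun i z hz => ?_⟩
    have := h 0 (Nat.zero_le _) i z
    rw [norm_iteratedFDeriv_zero, Real.norm_eq_abs] at this
    refine this.trans (le_mul_of_one_le_right (mul_nonneg hC (hW i z)) (one_le_pow₀ (th_ge_one z)))
  induction n generalizing p v with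
  | zero => exact ⟨bd, fun i => (hc i).continuous.continuousOn⟩
  | succ n ih =>
    have hc' : ∀ i, ContDiff ℝ n (fderiv ℝ (v i)) := fun i =>
      (hc i).fderiv_right (by exact_mod_cast le_rfl)
    have hb' : ∀ j : Fin d, ∃ C : ℝ, 0 ≤ C ∧ ∀ k, k ≤ n → ∀ i z,
        ‖iteratedFDeriv ℝ k (dj j (v i)) z‖ ≤ C * W i z := by
      intro j
      obtain ⟨C, hC, h⟩ := hb
      refine ⟨C, hC, fun k hk i z => ?_⟩
      have := norm_iteratedFDeriv_clm_apply_const (f := fderiv ℝ (v i))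
        (c := (Pi.single j 1 : Fin d → ℝ)) (x := z) (N := n) (n := k) (hc' i).contDiffAt
        (by exact_mod_cast hk)
      rw [norm_iteratedFDeriv_fderiv] at this
      refine this.trans ?_
      have hn : ‖(Pi.single j 1 : Fin d → ℝ)‖ ≤ 1 := by
        rw [Pi.norm_single]; simp
      calc _ ≤ 1 * ‖iteratedFDeriv ℝ (k + 1) (v i) z‖ := by gcongr
        _ ≤ _ := by rw [one_mul]; exact h (k + 1) (by omega) i z
    refine ⟨bd, fun i z hz => ((hc i).differentiable (by simp)).differentiableAt, fun j => ?_⟩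
    refine ih (p + 1) _ (fun i => (hc' i).clm_apply contDiff_const) (hb' j) ?_
    obtain ⟨C, hC, h⟩ := hb' j
    refine ⟨C, hC, fun i z hz => ?_⟩
    have := h 0 (Nat.zero_le _) i z
    rw [norm_iteratedFDeriv_zero, Real.norm_eq_abs] at this
    exact this.trans
      (le_mul_of_one_le_right (mul_nonneg hC (hW i z)) (one_le_pow₀ (th_ge_one z)))

end

section
variable {d : ℕ}

def wt (z : Fin d → ℝ) : ℝ := (1 + Qs z) ^ (-((d : ℝ) + 1) / 2)

lemma Qs_cont : Continuous (Qs (d := d)) := by unfold Qs; fun_prop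

lemma wt_nonneg (z : Fin d → ℝ) : 0 ≤ wt z := by
  unfold wt
  have := Qs_nonneg z
  positivity

lemma wt_meas : Measurable (wt (d := d)) := by
  unfold wt
  have : Measurable (Qs (d := d)) := Qs_cont.measurable
  fun_prop

lemma th_meas : Measurable (th (d := d)) := by
  unfold th
  have : Measurable (Qs (d := d)) := Qs_cont.measurable
  fun_prop

lemma norm_sq_le_Qs (z : Fin d → ℝ) : ‖z‖ ^ 2 ≤ Qs z := by
  have h := Qs_nonneg z
  have : ‖z‖ ≤ Real.sqrt (Qs z) := by
    rw [pi_norm_le_iff_of_nonneg (Real.sqrt_nonneg _)]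
    intro i
    exact Real.abs_le_sqrt (coord_sq_le z i)
  calc ‖z‖ ^ 2 ≤ Real.sqrt (Qs z) ^ 2 := by gcongr
    _ = _ := Real.sq_sqrt h

lemma radial_bound (p : ℕ) (hp : p < d) (y : ℝ) (hy : 0 < y) :
    y ^ (d - 1) * ((1 + y ^ 2) ^ (-((d : ℝ) + 1) / 2) * Real.sqrt (1 + (y ^ 2)⁻¹) ^ p) ≤
      (1 + y ^ 2)⁻¹ := by
  set s := Real.sqrt (1 + y ^ 2) with hs
  have hs0 : 0 < s := Real.sqrt_pos.2 (by positivity)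
  have hs2 : 1 + y ^ 2 = s ^ 2 := (Real.sq_sqrt (by positivity)).symm
  have hys : y ≤ s := Real.le_sqrt_of_sq_le (by linarith)
  have e1 : Real.sqrt (1 + (y ^ 2)⁻¹) = s / y := by
    rw [show 1 + (y ^ 2)⁻¹ = (1 + y ^ 2) / y ^ 2 by field_simp; ring, Real.sqrt_div (by positivity),
      Real.sqrt_sq hy.le]
  have e2 : (1 + y ^ 2) ^ (-((d : ℝ) + 1) / 2) = (s ^ (d + 1))⁻¹ := by
    rw [hs2, ← Real.rpow_natCast s 2, ← Real.rpow_mul hs0.le, ← Real.rpow_natCast s (d + 1),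
      ← Real.rpow_neg hs0.le]
    congr 1
    push_cast
    ring
  obtain ⟨k, rfl⟩ := Nat.exists_eq_add_of_lt hp
  rw [e1, e2, hs2, show p + k + 1 - 1 = p + k by omega]
  have : y ^ (p + k) * ((s ^ (p + k + 1 + 1))⁻¹ * (s / y) ^ p) = (y / s) ^ k * (s ^ 2)⁻¹ := by
    rw [div_pow, div_pow]
    field_simp
    ring
  rw [this]
  refine mul_le_of_le_one_left (by positivity) ?_
  exact pow_le_one₀ (by positivity) ((div_le_one hs0).2 hys)

lemma wt_int (p : ℕ) (hp : p < d) : Integrable (fun z : Fin d → ℝ => wt z * th z ^ p) := by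
  haveI : Nonempty (Fin d) := ⟨⟨0, by omega⟩⟩
  haveI : Nontrivial (Fin d → ℝ) := inferInstance
  let G : ℝ → ℝ := fun y => (1 + y ^ 2) ^ (-((d : ℝ) + 1) / 2) * Real.sqrt (1 + (y ^ 2)⁻¹) ^ p
  have hG : Integrable (fun z : Fin d → ℝ => G ‖z‖) := by
    rw [integrable_fun_norm_addHaar]
    refine Integrable.mono' (integrable_inv_one_add_sq.integrableOn) ?_ ?_
    · refine Measurable.aestronglyMeasurable ?_
      simp only [G]
      fun_prop
    · refine (ae_restrict_iff' measurableSet_Ioi).2 (Eventually.of_forall fun y hy => ?_)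
      have hy : 0 < y := hy
      have := radial_bound p hp y hy
      have hdim : Module.finrank ℝ (Fin d → ℝ) = d := by simp
      rw [hdim, smul_eq_mul, Real.norm_of_nonneg (by positivity)]
      exact this
  refine hG.mono' (wt_meas.mul (th_meas.pow_const p)).aestronglyMeasurable ?_
  have hae : ∀ᵐ z : Fin d → ℝ, z ≠ 0 := by
    simp [ae_iff]
  filter_upwards [hae] with z hz
  have hn : 0 < ‖z‖ := norm_pos_iff.2 hz
  have h1 := norm_sq_le_Qs z
  have h2 := th_ge_one z
  rw [Real.norm_of_nonneg (mul_nonneg (wt_nonneg z) (by positivity))]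
  simp only [G]
  have ha : wt z ≤ (1 + ‖z‖ ^ 2) ^ (-((d : ℝ) + 1) / 2) := by
    unfold wt
    refine Real.rpow_le_rpow_of_nonpos (by positivity) (by linarith) ?_
    have : (0 : ℝ) ≤ d := Nat.cast_nonneg d
    linarith
  have hb : th z ≤ Real.sqrt (1 + (‖z‖ ^ 2)⁻¹) := by
    unfold th
    gcongr
  have := wt_nonneg z
  gcongr

lemma exists_cutoff : ∃ φ : ℝ → ℝ, ContDiff ℝ 1 φ ∧ (∀ s ≤ 1, φ s = 0) ∧ (∀ s, 2 ≤ s → φ s = 1) ∧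
    (∀ s, |φ s| ≤ 1) ∧ (∀ s, 2 < s → deriv φ s = 0) ∧
    ∃ C, 0 ≤ C ∧ ∀ s, |s * deriv φ s| ≤ C := by
  let φ : ℝ → ℝ := fun s => Real.smoothTransition (s - 1)
  have hc : ContDiff ℝ 1 φ := Real.smoothTransition.contDiff.comp (contDiff_id.sub contDiff_const)
  have h0 : ∀ s ≤ 1, φ s = 0 := fun s hs => Real.smoothTransition.zero_of_nonpos (by linarith)
  have h1 : ∀ s, 2 ≤ s → φ s = 1 := fun s hs => Real.smoothTransition.one_of_one_le (by linarith)
  have hd1 : ∀ s, 2 < s → deriv φ s = 0 := by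
    intro s hs
    have : φ =ᶠ[𝓝 s] fun _ => 1 := by
      filter_upwards [lt_mem_nhds hs] with t ht using h1 t ht.le
    rw [this.deriv_eq, deriv_const]
  have hd0 : ∀ s, s < 1 → deriv φ s = 0 := by
    intro s hs
    have : φ =ᶠ[𝓝 s] fun _ => 0 := by
      filter_upwards [gt_mem_nhds hs] with t ht using h0 t ht.le
    rw [this.deriv_eq, deriv_const]
  refine ⟨φ, hc, h0, h1, fun s => ?_, hd1, ?_⟩
  · rw [abs_of_nonneg (Real.smoothTransition.nonneg _)]
    exact Real.smoothTransition.le_one _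
  · have hcont : Continuous (fun s => s * deriv φ s) := continuous_id.mul (hc.continuous_deriv le_rfl)
    obtain ⟨C, hC⟩ := (isCompact_Icc (a := (1 : ℝ)) (b := 2)).exists_bound_of_continuousOn
      hcont.continuousOn
    refine ⟨max C 0, le_max_right _ _, fun s => ?_⟩
    by_cases hs : s ∈ Icc (1 : ℝ) 2
    · exact (hC s hs).trans (le_max_left _ _)
    · rw [mem_Icc, not_and_or, not_le, not_le] at hs
      rcases hs with hs | hs
      · simp [hd0 s hs]
      · simp [hd1 s hs]

end

section
variable {d : ℕ}

lemma ae_ne_zero (hd : 0 < d) : ∀ᵐ z : Fin d → ℝ, z ≠ 0 := by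
  have : Nonempty (Fin d) := ⟨⟨0, hd⟩⟩
  simp [ae_iff]

lemma ibp {p : ℕ} (hp : p + 2 < d) (j : Fin d) (u : (Fin d → ℝ) → ℝ) (C : ℝ) (hC : 0 ≤ C)
    (hu : ∀ z, z ≠ 0 → |u z| ≤ C * wt z * th z ^ (p + 1))
    (hdu : ∀ z, z ≠ 0 → |dj j u z| ≤ C * wt z * th z ^ (p + 2))
    (hdiff : ∀ z, z ≠ 0 → DifferentiableAt ℝ u z)
    (hcont : ContinuousOn (dj j u) {0}ᶜ)
    (g : (Fin d → ℝ) → ℝ) (hg : Differentiable ℝ g) (hgc : Continuous (dj j g))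
    (G : ℝ) (hgb : ∀ z, |g z| ≤ G) (hIg : Integrable (fun z => u z * dj j g z)) :
    ∫ z, u z * dj j g z = -∫ z, dj j u z * g z := by
  obtain ⟨φ, hφ, h0, h1, hb, hd1, K, hK, hKb⟩ := exists_cutoff
  have hG : 0 ≤ G := (abs_nonneg _).trans (hgb 0)
  have hae := ae_ne_zero (d := d) (by omega)
  have hum : Measurable u := measurable_of_continuousOn_compl_singleton 0
    fun z hz => (hdiff z hz).continuousAt.continuousWithinAt
  have hdum : Measurable (dj j u) := measurable_of_continuousOn_compl_singleton 0 hcont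
  let χ : ℕ → (Fin d → ℝ) → ℝ := fun n z => φ (((n : ℝ) + 1) * Qs z)
  let χ' : ℕ → (Fin d → ℝ) → ℝ := fun n z =>
    deriv φ (((n : ℝ) + 1) * Qs z) * ((n : ℝ) + 1) * (2 * z j)
  have hφd : Differentiable ℝ φ := hφ.differentiable (by simp)
  have hφc : Continuous (deriv φ) := hφ.continuous_deriv le_rfl
  have hχd : ∀ n, Differentiable ℝ (χ n) := fun n z =>
    (hφd _).comp z (((Qs_hasFDerivAt z).differentiableAt).const_mul _)
  have hχc : ∀ n, Continuous (χ n) := fun n => (hχd n).continuous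
  have hχ'c : ∀ n, Continuous (χ' n) := fun n => by
    have := Qs_cont (d := d)
    simp only [χ']
    fun_prop
  have hχj : ∀ n z, dj j (χ n) z = χ' n z := by
    intro n z
    refine dj_comp_Qs (fun q => φ (((n : ℝ) + 1) * q)) _ z ?_ j
    have := (hφd (((n : ℝ) + 1) * Qs z)).hasDerivAt.comp (Qs z)
      ((hasDerivAt_id (Qs z)).const_mul ((n : ℝ) + 1))
    rw [mul_one] at this
    exact this
  have hχ'b : ∀ n z, z ≠ 0 → |χ' n z| ≤ 2 * K * th z := by
    intro n z hz
    have hq := Qs_pos hz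
    have hc : |z j * (Qs z)⁻¹| ≤ th z := by
      unfold th
      refine Real.abs_le_sqrt ?_
      have := coord_sq_le z j
      rw [mul_pow]
      calc z j ^ 2 * (Qs z)⁻¹ ^ 2 ≤ Qs z * (Qs z)⁻¹ ^ 2 := by gcongr
        _ = (Qs z)⁻¹ := by field_simp
        _ ≤ 1 + (Qs z)⁻¹ := by linarith
    have e : χ' n z = 2 * ((((n : ℝ) + 1) * Qs z) * deriv φ (((n : ℝ) + 1) * Qs z)) *
        (z j * (Qs z)⁻¹) := by
      simp only [χ']
      field_simp
    rw [e, abs_mul, abs_mul, abs_two]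
    have := hKb (((n : ℝ) + 1) * Qs z)
    gcongr
  have hf0 : ∀ n, (fun z => χ n z * u z) =ᶠ[𝓝 0] fun _ => 0 := by
    intro n
    have : ∀ᶠ z in 𝓝 (0 : Fin d → ℝ), ((n : ℝ) + 1) * Qs z < 1 := by
      have hc : Continuous (fun z : Fin d → ℝ => ((n : ℝ) + 1) * Qs z) := by
        have := Qs_cont (d := d)
        fun_prop
      refine hc.continuousAt.eventually_lt_const ?_
      simp [Qs]
    filter_upwards [this] with z hz
    simp only [χ]
    rw [h0 _ hz.le, zero_mul]
  have hfd : ∀ n, Differentiable ℝ (fun z => χ n z * u z) := by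
    intro n z
    by_cases hz : z = 0
    · subst hz
      exact (differentiableAt_const (0 : ℝ)).congr_of_eventuallyEq (hf0 n)
    · exact (hχd n z).mul (hdiff z hz)
  have hfj : ∀ n z, z ≠ 0 → fderiv ℝ (fun z => χ n z * u z) z (Pi.single j 1) =
      χ n z * dj j u z + u z * χ' n z := by
    intro n z hz
    rw [fderiv_fun_mul (hχd n z) (hdiff z hz), ← hχj n z]
    simp [dj]
  let B : (Fin d → ℝ) → ℝ := fun z => ((C + C * (2 * K)) * G) * (wt z * th z ^ (p + 2))
  have hB : Integrable B := (wt_int (p + 2) hp).const_mul _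
  have hbd : ∀ n z, z ≠ 0 → ‖(χ n z * dj j u z + u z * χ' n z) * g z‖ ≤ B z := by
    intro n z hz
    have a1 : |χ n z| ≤ 1 := hb _
    have a2 := hdu z hz
    have a3 := hu z hz
    have a4 := hχ'b n z hz
    have a5 := hgb z
    have hth := th_ge_one z
    have hw := wt_nonneg z
    rw [Real.norm_eq_abs, abs_mul]
    calc |χ n z * dj j u z + u z * χ' n z| * |g z|
        ≤ (1 * (C * wt z * th z ^ (p + 2)) + (C * wt z * th z ^ (p + 1)) * (2 * K * th z)) * G := by
          refine mul_le_mul ((abs_add_le _ _).trans ?_) a5 (abs_nonneg _) (by positivity)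
          rw [abs_mul, abs_mul]
          gcongr
      _ = B z := by simp only [B]; ring
  have hmeas : ∀ n, Measurable fun z => (χ n z * dj j u z + u z * χ' n z) * g z := fun n =>
    ((((hχc n).measurable.mul hdum).add (hum.mul (hχ'c n).measurable))).mul hg.continuous.measurable
  have hI1 : ∀ n, Integrable fun z => (χ n z * dj j u z + u z * χ' n z) * g z := fun n =>
    hB.mono' (hmeas n).aestronglyMeasurable (by filter_upwards [hae] with z hz using hbd n z hz)
  have hae1 : ∀ n, (fun z => fderiv ℝ (fun z => χ n z * u z) z (Pi.single j 1) * g z) =ᵐ[volume]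
      fun z => (χ n z * dj j u z + u z * χ' n z) * g z := fun n => by
    filter_upwards [hae] with z hz
    rw [hfj n z hz]
  have hbd2 : ∀ n z, ‖χ n z * u z * dj j g z‖ ≤ ‖u z * dj j g z‖ := by
    intro n z
    rw [mul_assoc, norm_mul]
    exact mul_le_of_le_one_left (norm_nonneg _) (hb _)
  have hmeas2 : ∀ n, Measurable fun z => χ n z * u z * dj j g z := fun n =>
    ((hχc n).measurable.mul hum).mul hgc.measurable
  have hI2 : ∀ n, Integrable fun z => χ n z * u z * dj j g z := fun n =>
    hIg.mono (hmeas2 n).aestronglyMeasurable (Eventually.of_forall fun z => hbd2 n z)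
  have hI3 : ∀ n, Integrable fun z => χ n z * u z * g z := by
    intro n
    refine ((wt_int (p + 1) (by omega : p + 1 < d)).const_mul (C * G)).mono'
      (((hχc n).measurable.mul hum).mul hg.continuous.measurable).aestronglyMeasurable ?_
    filter_upwards [hae] with z hz
    have a1 : |χ n z| ≤ 1 := hb _
    have a3 := hu z hz
    have a5 := hgb z
    have hth := th_ge_one z
    have hw := wt_nonneg z
    rw [Real.norm_eq_abs, abs_mul, abs_mul]
    calc |χ n z| * |u z| * |g z| ≤ 1 * (C * wt z * th z ^ (p + 1)) * G := by gcongr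
      _ = _ := by ring
  have key : ∀ n, ∫ z, χ n z * u z * dj j g z =
      -∫ z, (χ n z * dj j u z + u z * χ' n z) * g z := by
    intro n
    have := integral_mul_fderiv_eq_neg_fderiv_mul_of_integrable (μ := (volume : Measure (Fin d → ℝ)))
      (f := fun z => χ n z * u z) (g := g)
      (v := Pi.single j 1) ((integrable_congr (hae1 n)).2 (hI1 n)) (hI2 n) (hI3 n)
      (fun z _ => hfd n z) (fun z _ => hg z)
    rw [integral_congr_ae (hae1 n)] at this
    exact this
  have hlarge : ∀ z : Fin d → ℝ, z ≠ 0 → ∀ᶠ n : ℕ in atTop, 2 < ((n : ℝ) + 1) * Qs z := by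
    intro z hz
    have hq := Qs_pos hz
    have : Tendsto (fun n : ℕ => ((n : ℝ) + 1) * Qs z) atTop atTop :=
      (tendsto_atTop_add_const_right _ _ tendsto_natCast_atTop_atTop).atTop_mul_const hq
    exact this.eventually_gt_atTop 2
  have t1 : Tendsto (fun n => ∫ z, χ n z * u z * dj j g z) atTop (𝓝 (∫ z, u z * dj j g z)) := by
    refine tendsto_integral_of_dominated_convergence (fun z => ‖u z * dj j g z‖)
      (fun n => (hmeas2 n).aestronglyMeasurable) hIg.norm
      (fun n => Eventually.of_forall fun z => hbd2 n z) ?_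
    filter_upwards [hae] with z hz
    refine tendsto_const_nhds.congr' ?_
    filter_upwards [hlarge z hz] with n hn
    simp only [χ]
    rw [h1 _ hn.le, one_mul]
  have t2 : Tendsto (fun n => ∫ z, (χ n z * dj j u z + u z * χ' n z) * g z) atTop
      (𝓝 (∫ z, dj j u z * g z)) := by
    refine tendsto_integral_of_dominated_convergence B
      (fun n => (hmeas n).aestronglyMeasurable) hB
      (fun n => by filter_upwards [hae] with z hz using hbd n z hz) ?_
    filter_upwards [hae] with z hz
    refine tendsto_const_nhds.congr' ?_
    filter_upwards [hlarge z hz] with n hn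
    simp only [χ, χ']
    rw [h1 _ hn.le, hd1 _ hn]
    ring
  refine tendsto_nhds_unique t1 ?_
  simp_rw [key]
  exact t2.neg

end

section
variable {ι : Type} {d : ℕ}

def Bi (A : Matrix (Fin d) (Fin d) ℤ) : Matrix (Fin d) (Fin d) ℝ := (A.map (Int.cast : ℤ → ℝ))⁻¹

def bfun (A : Matrix (Fin d) (Fin d) ℤ) (j : Fin d) (z : Fin d → ℝ) : ℝ :=
  ∑ k, Bi A k j * (z k * (Qs z)⁻¹)

def Dop (A : Matrix (Fin d) (Fin d) ℤ) (v : ι → (Fin d → ℝ) → ℝ) (i : ι) (z : Fin d → ℝ) : ℝ :=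
  ∑ j, dj j (fun z => v i z * bfun A j z) z

lemma bfun_id (A : Matrix (Fin d) (Fin d) ℤ) (hdet : A.det ≠ 0) (z : Fin d → ℝ) (hz : z ≠ 0) :
    ∑ j, bfun A j z * (∑ k, (A j k : ℝ) * z k) = 1 := by
  have hu : IsUnit (A.map (Int.cast : ℤ → ℝ)).det := by
    have : (A.map (Int.cast : ℤ → ℝ)).det = (A.det : ℝ) := by
      exact (RingHom.map_det (Int.castRingHom ℝ) A).symm
    rw [this, isUnit_iff_ne_zero]
    exact_mod_cast hdet
  have h1 : Bi A * A.map (Int.cast : ℤ → ℝ) = 1 := Matrix.nonsing_inv_mul _ hu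
  have h2 : ∀ k, ∑ j, Bi A k j * (∑ l, (A j l : ℝ) * z l) = z k := by
    intro k
    have : (Bi A * A.map (Int.cast : ℤ → ℝ)).mulVec z = z := by rw [h1, Matrix.one_mulVec]
    rw [← Matrix.mulVec_mulVec] at this
    exact congrFun this k
  have hq := Qs_pos hz
  calc ∑ j, bfun A j z * (∑ k, (A j k : ℝ) * z k)
      = ∑ j, ∑ k, (z k * (Qs z)⁻¹) * (Bi A k j * (∑ l, (A j l : ℝ) * z l)) := by
        refine Finset.sum_congr rfl fun j _ => ?_
        unfold bfun
        rw [Finset.sum_mul]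
        refine Finset.sum_congr rfl fun k _ => ?_
        ring
    _ = ∑ k, (z k * (Qs z)⁻¹) * z k := by
        rw [Finset.sum_comm]
        refine Finset.sum_congr rfl fun k _ => ?_
        rw [← Finset.mul_sum, h2]
    _ = Qs z * (Qs z)⁻¹ := by
        conv_rhs => rw [Qs, Finset.sum_mul]
        refine Finset.sum_congr rfl fun k _ => ?_
        rw [Qs]
        ring
    _ = 1 := mul_inv_cancel₀ hq.ne'

lemma cls_b (A : Matrix (Fin d) (Fin d) ℤ) (n : ℕ) (j : Fin d) :
    Cls (ι := ι) (d := d) (fun _ _ => 1) n 1 (fun _ z => bfun A j z) := by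
  unfold bfun
  exact Cls.sum (v := fun k (_ : ι) z => Bi A k j * (z k * (Qs z)⁻¹)) Finset.univ
    (fun _ _ => zero_le_one) fun k => ((cls_ac n).2 k).const_mul _

lemma cls_vb {W : ι → (Fin d → ℝ) → ℝ} (A : Matrix (Fin d) (Fin d) ℤ) {n p : ℕ}
    {v : ι → (Fin d → ℝ) → ℝ} (h : Cls W n p v) (j : Fin d) :
    Cls W n (p + 1) (fun i z => v i z * bfun A j z) := by
  have := h.mul (cls_b (ι := ι) A n j)
  simp only [mul_one] at this
  exact this

lemma cls_D {W : ι → (Fin d → ℝ) → ℝ} (hW : ∀ i z, 0 ≤ W i z) (A : Matrix (Fin d) (Fin d) ℤ)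
    {n p : ℕ} {v : ι → (Fin d → ℝ) → ℝ} (h : Cls W (n + 1) p v) :
    Cls W n (p + 2) (Dop A v) := by
  unfold Dop
  exact Cls.sum (v := fun j i => dj j (fun z => v i z * bfun A j z)) Finset.univ hW
    fun j => (cls_vb A h j).2.2 j

lemma Fq_hasFDerivAt (A : Matrix (Fin d) (Fin d) ℤ) (z : Fin d → ℝ) :
    HasFDerivAt (Fq A) ((1 / 2 : ℝ) • ∑ i, ∑ j, ((A i j : ℝ) * z i) •
      ContinuousLinearMap.proj (R := ℝ) (φ := fun _ : Fin d => ℝ) j + (1 / 2 : ℝ) • ∑ i, ∑ j,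
      ((A i j : ℝ) * z j) • ContinuousLinearMap.proj (R := ℝ) (φ := fun _ : Fin d => ℝ) i) z := by
  have hp : ∀ i, HasFDerivAt (fun z : Fin d → ℝ => z i)
      (ContinuousLinearMap.proj (R := ℝ) (φ := fun _ : Fin d => ℝ) i) z := fun i =>
    (ContinuousLinearMap.proj (R := ℝ) (φ := fun _ : Fin d => ℝ) i).hasFDerivAt
  have := (HasFDerivAt.fun_sum (u := Finset.univ) fun i (_ : i ∈ Finset.univ) =>
    HasFDerivAt.fun_sum (u := Finset.univ) fun j (_ : j ∈ Finset.univ) =>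
      ((hp i).const_mul (A i j : ℝ)).mul (hp j)).const_mul (1 / 2 : ℝ)
  refine this.congr_fderiv ?_
  rw [← smul_add, ← Finset.sum_add_distrib]
  congr 1
  refine Finset.sum_congr rfl fun i _ => ?_
  rw [← Finset.sum_add_distrib]
  refine Finset.sum_congr rfl fun j _ => ?_
  congr 1
  rw [smul_smul]
  ring_nf

lemma dj_Fq (A : Matrix (Fin d) (Fin d) ℤ) (hA : A.IsSymm) (j : Fin d) (z : Fin d → ℝ) :
    dj j (Fq A) z = ∑ k, (A j k : ℝ) * z k := by
  unfold dj
  rw [(Fq_hasFDerivAt A z).fderiv]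
  simp [Pi.single_apply]
  have : ∑ x, (A x j : ℝ) * z x = ∑ k, (A j k : ℝ) * z k :=
    Finset.sum_congr rfl fun k _ => by rw [hA.apply]
  rw [this]
  ring

lemma Fq_cont (A : Matrix (Fin d) (Fin d) ℤ) : Continuous (Fq A) := by unfold Fq; fun_prop

lemma comp_hasFDerivAt (A : Matrix (Fin d) (Fin d) ℤ) (m x : ℝ)
    (Φ φ : ℝ → ℝ) (hΦ : ∀ t, HasDerivAt Φ (φ t) t) (z : Fin d → ℝ) :
    HasFDerivAt (fun z => Φ ((Fq A z - m) / x))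
      ((φ ((Fq A z - m) / x) * x⁻¹) • fderiv ℝ (Fq A) z) z := by
  have h1 := ((Fq_hasFDerivAt A z).differentiableAt.hasFDerivAt.sub_const m)
  have h2 : HasDerivAt (fun t => Φ (t / x)) (φ ((Fq A z - m) / x) * x⁻¹) (Fq A z - m) := by
    have := (hΦ ((Fq A z - m) / x)).comp (Fq A z - m) ((hasDerivAt_id (Fq A z - m)).div_const x)
    rw [one_div] at this
    exact this
  have h3 := HasDerivAt.comp_hasFDerivAt (h₂ := fun t => Φ (t / x)) z h2 h1
  exact h3

lemma prod_le_Qs (z : Fin d → ℝ) (k l : Fin d) : |z k * z l| ≤ Qs z := by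
  have h1 := coord_sq_le z k
  have h2 := coord_sq_le z l
  rw [abs_mul]
  nlinarith [sq_nonneg (|z k| - |z l|), sq_abs (z k), sq_abs (z l)]

lemma bA_bound (A : Matrix (Fin d) (Fin d) ℤ) (j : Fin d) : ∃ K, 0 ≤ K ∧ ∀ z : Fin d → ℝ, z ≠ 0 →
    |bfun A j z * ∑ k, (A j k : ℝ) * z k| ≤ K := by
  refine ⟨∑ k, ∑ l, |Bi A k j| * |(A j l : ℝ)|, by positivity, fun z hz => ?_⟩
  have hq := Qs_pos hz
  unfold bfun
  rw [Finset.sum_mul_sum]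
  refine (Finset.abs_sum_le_sum_abs _ _).trans (Finset.sum_le_sum fun k _ => ?_)
  refine (Finset.abs_sum_le_sum_abs _ _).trans (Finset.sum_le_sum fun l _ => ?_)
  rw [show Bi A k j * (z k * (Qs z)⁻¹) * ((A j l : ℝ) * z l) =
    (Bi A k j * (A j l : ℝ)) * ((z k * z l) * (Qs z)⁻¹) by ring, abs_mul, abs_mul (Bi A k j)]
  refine mul_le_of_le_one_right (by positivity) ?_
  rw [abs_mul, abs_of_pos (inv_pos.2 hq), ← div_eq_mul_inv, div_le_one hq]
  exact prod_le_Qs z k l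

lemma ibpD (A : Matrix (Fin d) (Fin d) ℤ) (hA : A.IsSymm) (hdet : A.det ≠ 0) (m : ℝ)
    (N : ι → ℝ) (hN : ∀ i, 0 ≤ N i) {p : ℕ} (hp : p + 2 < d) (v : ι → (Fin d → ℝ) → ℝ)
    (hv : Cls (fun i z => N i * wt z) 1 p v) (Φ φ : ℝ → ℝ) (hΦ : ∀ t, HasDerivAt Φ (φ t) t)
    (hφc : Continuous φ) (G G' : ℝ) (hΦb : ∀ t, |Φ t| ≤ G) (hφb : ∀ t, |φ t| ≤ G') (i : ι)
    (x : ℝ) (hx : 0 < x) :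
    ∫ z, v i z * (x⁻¹ * φ ((Fq A z - m) / x)) = -∫ z, Dop A v i z * Φ ((Fq A z - m) / x) := by
  have hae := ae_ne_zero (d := d) (by omega)
  have hG : 0 ≤ G := (abs_nonneg _).trans (hΦb 0)
  have hG' : 0 ≤ G' := (abs_nonneg _).trans (hφb 0)
  let g : (Fin d → ℝ) → ℝ := fun z => Φ ((Fq A z - m) / x)
  have hgd : Differentiable ℝ g := fun z => (comp_hasFDerivAt A m x Φ φ hΦ z).differentiableAt
  have hgj : ∀ j z, dj j g z = φ ((Fq A z - m) / x) * x⁻¹ * ∑ k, (A j k : ℝ) * z k := by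
    intro j z
    rw [← dj_Fq A hA j z]
    unfold dj
    rw [(comp_hasFDerivAt A m x Φ φ hΦ z).fderiv]
    rfl
  have hFc := Fq_cont A
  have hgjc : ∀ j, Continuous (dj j g) := by
    intro j
    have : dj j g = fun z => φ ((Fq A z - m) / x) * x⁻¹ * ∑ k, (A j k : ℝ) * z k :=
      funext (hgj j)
    rw [this]
    fun_prop
  have hvm : Measurable (v i) := measurable_of_continuousOn_compl_singleton 0 (hv.contOn i)
  obtain ⟨C, hC, hb⟩ := hv.bd
  have hu : ∀ j, Cls (fun i z => N i * wt z) 1 (p + 1) (fun i z => v i z * bfun A j z) :=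
    fun j => cls_vb A hv j
  have hum : ∀ j, Measurable (fun z => v i z * bfun A j z) := fun j =>
    measurable_of_continuousOn_compl_singleton 0 ((hu j).contOn i)
  have hIg : ∀ j, Integrable (fun z => (v i z * bfun A j z) * dj j g z) := by
    intro j
    obtain ⟨K, hK, hKb⟩ := bA_bound A j
    refine ((wt_int p (by omega : p < d)).const_mul (C * N i * (G' * x⁻¹) * K)).mono'
      ((hum j).mul (hgjc j).measurable).aestronglyMeasurable ?_
    filter_upwards [hae] with z hz
    have hth := th_ge_one z
    have hw := wt_nonneg z
    have h1 := hb i z hz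
    have h2 := hKb z hz
    have h3 := hφb ((Fq A z - m) / x)
    have hNi := hN i
    rw [hgj, Real.norm_eq_abs, show v i z * bfun A j z * (φ ((Fq A z - m) / x) * x⁻¹ *
      ∑ k, (A j k : ℝ) * z k) = v i z * (φ ((Fq A z - m) / x) * x⁻¹) *
      (bfun A j z * ∑ k, (A j k : ℝ) * z k) by ring, abs_mul, abs_mul, abs_mul (φ _),
      abs_of_pos (inv_pos.2 hx)]
    calc _ ≤ (C * (N i * wt z) * th z ^ p) * (G' * x⁻¹) * K := by gcongr
      _ = _ := by ring
  have hIg2 : ∀ j, Integrable (fun z => dj j (fun z => v i z * bfun A j z) z * g z) := by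
    intro j
    obtain ⟨C2, hC2, hb2⟩ := ((hu j).2.2 j).bd
    refine ((wt_int (p + 2) (by omega)).const_mul (C2 * N i * G)).mono'
      ((measurable_of_continuousOn_compl_singleton 0 (((hu j).2.2 j).contOn i)).mul
        hgd.continuous.measurable).aestronglyMeasurable ?_
    filter_upwards [hae] with z hz
    have hth := th_ge_one z
    have hw := wt_nonneg z
    have h1 := hb2 i z hz
    have h3 : |g z| ≤ G := hΦb _
    have hNi := hN i
    rw [Real.norm_eq_abs, abs_mul]
    calc _ ≤ (C2 * (N i * wt z) * th z ^ (p + 1 + 1)) * G := by gcongr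
      _ = _ := by ring
  have key : ∀ j, ∫ z, (v i z * bfun A j z) * dj j g z =
      -∫ z, dj j (fun z => v i z * bfun A j z) z * g z := by
    intro j
    obtain ⟨C1, hC1, hb1⟩ := (hu j).bd
    obtain ⟨C2, hC2, hb2⟩ := ((hu j).2.2 j).bd
    refine ibp hp j (fun z => v i z * bfun A j z) (max C1 C2 * N i)
      (mul_nonneg (le_max_of_le_left hC1) (hN i)) (fun z hz => ?_) (fun z hz => ?_)
      ((hu j).2.1 i) (((hu j).2.2 j).contOn i) g hgd (hgjc j) G (fun z => hΦb _) (hIg j)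
    · have hth := th_ge_one z
      have hw := wt_nonneg z
      have hNi := hN i
      refine (hb1 i z hz).trans ?_
      rw [mul_assoc (max C1 C2)]
      gcongr
      exact le_max_left _ _
    · have hth := th_ge_one z
      have hw := wt_nonneg z
      have hNi := hN i
      refine (hb2 i z hz).trans ?_
      rw [mul_assoc (max C1 C2)]
      gcongr
      exact le_max_right _ _
  calc ∫ z, v i z * (x⁻¹ * φ ((Fq A z - m) / x))
      = ∫ z, ∑ j, (v i z * bfun A j z) * dj j g z := by
        refine integral_congr_ae ?_
        filter_upwards [hae] with z hz
        have := bfun_id A hdet z hz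
        calc v i z * (x⁻¹ * φ ((Fq A z - m) / x)) = v i z * (x⁻¹ * φ ((Fq A z - m) / x)) *
              ∑ j, bfun A j z * (∑ k, (A j k : ℝ) * z k) := by rw [this, mul_one]
          _ = _ := by
            rw [Finset.mul_sum]
            refine Finset.sum_congr rfl fun j _ => ?_
            rw [hgj]
            ring
    _ = ∑ j, ∫ z, (v i z * bfun A j z) * dj j g z := integral_finsetSum _ fun j _ => hIg j
    _ = -∑ j, ∫ z, dj j (fun z => v i z * bfun A j z) z * g z := by
        rw [← Finset.sum_neg_distrib]
        exact Finset.sum_congr rfl fun j _ => key j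
    _ = -∫ z, ∑ j, dj j (fun z => v i z * bfun A j z) z * g z := by
        rw [integral_finsetSum _ fun j _ => hIg2 j]
    _ = _ := by
        congr 2
        funext z
        rw [Dop, Finset.sum_mul]

end

section
variable {ι : Type} {d : ℕ}

lemma cls_wt : Cls (ι := Unit) (d := d) (fun _ z => wt z) 1 0 (fun _ z => wt z) := by
  have hpos : ∀ z : Fin d → ℝ, 0 < 1 + Qs z := fun z => by have := Qs_nonneg z; linarith
  have hder : ∀ z : Fin d → ℝ, HasDerivAt (fun q : ℝ => (1 + q) ^ (-((d : ℝ) + 1) / 2))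
      (-((d : ℝ) + 1) / 2 * (1 + Qs z) ^ (-((d : ℝ) + 1) / 2 - 1)) (Qs z) := by
    intro z
    have := ((hasDerivAt_id (Qs z)).const_add 1).rpow_const (p := -((d : ℝ) + 1) / 2)
      (Or.inl (hpos z).ne')
    simpa using this
  have hj : ∀ (j : Fin d) (z : Fin d → ℝ), dj j (wt (d := d)) z =
      -((d : ℝ) + 1) / 2 * (1 + Qs z) ^ (-((d : ℝ) + 1) / 2 - 1) * (2 * z j) := fun j z =>
    dj_comp_Qs _ _ z (hder z) j
  have hQ := Qs_cont (d := d)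
  refine ⟨⟨1, zero_le_one, fun _ z hz => ?_⟩, fun _ z hz => ?_, fun j => ⟨⟨(d : ℝ) + 1, by positivity,
    fun _ z hz => ?_⟩, fun _ => ?_⟩⟩
  · rw [abs_of_nonneg (wt_nonneg z)]; simp
  · exact ((hder z).comp_hasFDerivAt z (Qs_hasFDerivAt z)).differentiableAt
  · change |dj j (wt (d := d)) z| ≤ _
    have hp := hpos z
    rw [hj, Real.rpow_sub_one hp.ne', show -((d : ℝ) + 1) / 2 * ((1 + Qs z) ^ (-((d : ℝ) + 1) / 2) /
      (1 + Qs z)) * (2 * z j) = -(((d : ℝ) + 1) * wt z * (z j / (1 + Qs z))) by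
        unfold wt; ring, abs_neg, abs_mul, abs_of_nonneg
        (mul_nonneg (by positivity) (wt_nonneg z))]
    have h1 := wt_nonneg z
    have h2 := th_ge_one z
    have h3 : |z j / (1 + Qs z)| ≤ 1 := by
      rw [abs_div, abs_of_pos hp, div_le_one hp]
      have := coord_sq_le z j
      nlinarith [sq_abs (z j), sq_nonneg (|z j| - 1)]
    have h4 : |z j / (1 + Qs z)| ≤ th z ^ (0 + 1) := by
      rw [zero_add, pow_one]; linarith
    gcongr
  · have : dj j (wt (d := d)) = fun z =>
      -((d : ℝ) + 1) / 2 * (1 + Qs z) ^ (-((d : ℝ) + 1) / 2 - 1) * (2 * z j) := funext (hj j)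
    refine Continuous.continuousOn ?_
    change Continuous (dj j (wt (d := d)))
    rw [this]
    have : Continuous fun z : Fin d → ℝ => (1 + Qs z) ^ (-((d : ℝ) + 1) / 2 - 1) :=
      Continuous.rpow_const (by fun_prop) fun z => Or.inl (hpos z).ne'
    fun_prop

lemma cls_one : Cls (ι := Unit) (d := d) (fun _ _ => 1) 1 2 (fun _ _ => 1) := by
  refine cls_of_contDiff (fun _ _ => zero_le_one) 1 2 _ (fun _ => contDiff_const)
    ⟨1, zero_le_one, fun k hk _ z => ?_⟩
  interval_cases k
  · simp
  · rw [iteratedFDeriv_const_of_ne (by norm_num)]; simp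

lemma cls_wtth (l : ℕ) : Cls (ι := Unit) (d := d) (fun _ z => wt z) 1 (2 * l)
    (fun _ z => wt z * th z ^ (2 * l)) := by
  induction l with
  | zero => simpa using cls_wt (d := d)
  | succ l ih =>
    have h1 := ih.mul ((cls_one (d := d)).add (cls_ac 1).1)
    simp only [mul_one] at h1
    refine h1.congr fun _ z hz => ?_
    rw [← th_sq z]
    ring

lemma key_base (A : Matrix (Fin d) (Fin d) ℤ) (hA : A.IsSymm) (hdet : A.det ≠ 0) (m : ℝ)
    (N : ι → ℝ) (hN : ∀ i, 0 ≤ N i) (l : ℕ) (v : ι → (Fin d → ℝ) → ℝ) (g : ℝ → ℝ) (hg : Rap g)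
    (hv : Cls (fun i z => N i * wt z) 0 (2 * l) v) (hl : 2 * l + 2 < d) :
    ∃ C : ℝ, 0 ≤ C ∧ ∀ i, ∀ x : ℝ, 0 < x →
      |∫ z, v i z * (x⁻¹ * g ((Fq A z - m) / x))| ≤ C * N i := by
  have hae := ae_ne_zero (d := d) (by omega)
  obtain ⟨C, hC, hb⟩ := hv.bd
  obtain ⟨C', hC', hb'⟩ := hg.bound 0
  have hcl := cls_wtth (d := d) l
  have hcl' : Cls (ι := Unit) (d := d) (fun _ z => 1 * wt z) 1 (2 * l)
    (fun _ z => wt z * th z ^ (2 * l)) := by simpa only [one_mul] using hcl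
  have hD := cls_D (fun _ z => wt_nonneg z) A hcl
  obtain ⟨C2, hC2, hb2⟩ := hD.bd
  have hI2 := wt_int (d := d) (2 * l + 2) hl
  have hJ : 0 ≤ ∫ z : Fin d → ℝ, wt z * th z ^ (2 * l + 2) := integral_nonneg fun z =>
    mul_nonneg (wt_nonneg z) (pow_nonneg (zero_le_one.trans (th_ge_one z)) _)
  refine ⟨C * C' * (C2 * (Real.pi / 2) * ∫ z : Fin d → ℝ, wt z * th z ^ (2 * l + 2)),
    by have := Real.pi_pos; positivity, fun i x hx => ?_⟩
  let ψ : ℝ → ℝ := fun t => 1 / (1 + t ^ 2)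
  have hψc : Continuous ψ := by
    refine continuous_const.div (by fun_prop) fun t => by positivity
  have hψb : ∀ t, |ψ t| ≤ 1 := by
    intro t
    simp only [ψ]
    rw [abs_of_nonneg (by positivity), div_le_one (by positivity)]
    nlinarith [sq_nonneg t]
  have hFc := Fq_cont A
  have habs : ∀ t, |Real.arctan t| ≤ Real.pi / 2 := fun t =>
    abs_le.2 ⟨(Real.neg_pi_div_two_lt_arctan t).le, (Real.arctan_lt_pi_div_two t).le⟩
  have hib := ibpD A hA hdet m (fun _ : Unit => (1 : ℝ)) (fun _ => zero_le_one) hl _ hcl'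
    Real.arctan ψ (fun t => Real.hasDerivAt_arctan t) hψc (Real.pi / 2) 1 habs hψb () x hx
  have hIψ : Integrable fun z : Fin d → ℝ => wt z * th z ^ (2 * l) *
      (x⁻¹ * ψ ((Fq A z - m) / x)) := by
    refine ((wt_int (d := d) (2 * l) (by omega)).mul_const x⁻¹).mono' ?_ ?_
    · refine Measurable.aestronglyMeasurable ?_
      have h1 := wt_meas (d := d)
      have h2 := th_meas (d := d)
      have h3 : Measurable (fun z : Fin d → ℝ => x⁻¹ * ψ ((Fq A z - m) / x)) :=
        Continuous.measurable (by fun_prop)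
      exact (h1.mul (h2.pow_const _)).mul h3
    · refine Eventually.of_forall fun z => ?_
      have h1 := wt_nonneg z
      have h2 := th_ge_one z
      have h3 := hψb ((Fq A z - m) / x)
      rw [norm_mul, Real.norm_of_nonneg (by positivity), norm_mul, Real.norm_of_nonneg
        (by positivity : 0 ≤ x⁻¹)]
      refine mul_le_mul_of_nonneg_left (mul_le_of_le_one_right (by positivity) h3) (by positivity)
  have h1 : |∫ z, v i z * (x⁻¹ * g ((Fq A z - m) / x))| ≤
      ∫ z : Fin d → ℝ, C * C' * N i * (wt z * th z ^ (2 * l) * (x⁻¹ * ψ ((Fq A z - m) / x))) := by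
    rw [← Real.norm_eq_abs]
    refine norm_integral_le_of_norm_le (hIψ.const_mul _) ?_
    filter_upwards [hae] with z hz
    have a1 := hb i z hz
    have a2 := hb' ((Fq A z - m) / x)
    rw [pow_zero, one_mul] at a2
    have hw := wt_nonneg z
    have ht := th_ge_one z
    have hNi := hN i
    rw [Real.norm_eq_abs, abs_mul, abs_mul, abs_of_pos (inv_pos.2 hx)]
    calc _ ≤ (C * (N i * wt z) * th z ^ (2 * l)) *
          (x⁻¹ * (C' * (1 + ((Fq A z - m) / x) ^ 2)⁻¹)) := by gcongr
      _ = _ := by simp only [ψ, one_div]; ring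
  rw [integral_const_mul, hib] at h1
  have h2 : |∫ z, Dop A (fun (_ : Unit) z => wt z * th z ^ (2 * l)) () z *
      Real.arctan ((Fq A z - m) / x)| ≤
      ∫ z : Fin d → ℝ, C2 * (Real.pi / 2) * (wt z * th z ^ (2 * l + 2)) := by
    rw [← Real.norm_eq_abs]
    refine norm_integral_le_of_norm_le (hI2.const_mul _) ?_
    filter_upwards [hae] with z hz
    have a1 := hb2 () z hz
    have a2 := habs ((Fq A z - m) / x)
    have hw := wt_nonneg z
    have ht := th_ge_one z
    rw [Real.norm_eq_abs, abs_mul]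
    calc _ ≤ (C2 * wt z * th z ^ (2 * l + 2)) * (Real.pi / 2) := by gcongr
      _ = _ := by ring
  rw [integral_const_mul] at h2
  have hNi := hN i
  refine h1.trans ?_
  rw [show C * C' * (C2 * (Real.pi / 2) * ∫ z : Fin d → ℝ, wt z * th z ^ (2 * l + 2)) * N i =
    C * C' * N i * (C2 * (Real.pi / 2) * ∫ z : Fin d → ℝ, wt z * th z ^ (2 * l + 2)) by ring]
  refine mul_le_mul_of_nonneg_left ?_ (by positivity)
  exact (neg_le_abs _).trans h2

lemma key (A : Matrix (Fin d) (Fin d) ℤ) (hA : A.IsSymm) (hdet : A.det ≠ 0) (m : ℝ)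
    (N : ι → ℝ) (hN : ∀ i, 0 ≤ N i) (M l : ℕ) (v : ι → (Fin d → ℝ) → ℝ) (g : ℝ → ℝ) (hg : Rap g)
    (hgm : ∀ i < M, ∫ y, y ^ i * g y = 0)
    (hv : Cls (fun i z => N i * wt z) M (2 * l) v) (hl : 2 * l + 2 * M + 2 < d) :
    ∃ C : ℝ, 0 ≤ C ∧ ∀ i, ∀ x : ℝ, 0 < x →
      |∫ z, v i z * (x⁻¹ * g ((Fq A z - m) / x))| ≤ C * x ^ M * N i := by
  induction M generalizing l v g with
  | zero =>
    obtain ⟨C, hC, h⟩ := key_base A hA hdet m N hN l v g hg hv (by omega)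
    exact ⟨C, hC, fun i x hx => by simpa using h i x hx⟩
  | succ M ih =>
    obtain ⟨g1, hg1, hd1, hm1⟩ := rap_antideriv g hg M hgm
    have hW : ∀ (i : ι) (z : Fin d → ℝ), 0 ≤ N i * wt z := fun i z => mul_nonneg (hN i) (wt_nonneg z)
    have hDv := cls_D hW A hv
    obtain ⟨C, hC, h⟩ := ih (l + 1) (Dop A v) g1 hg1 hm1 hDv (by omega)
    have hv1 : ∀ {n p : ℕ} {v : ι → (Fin d → ℝ) → ℝ}, Cls (fun i z => N i * wt z) (n + 1) p v →
        Cls (fun i z => N i * wt z) 1 p v := by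
      intro n p v hv
      induction n with
      | zero => exact hv
      | succ n ih => exact ih hv.mono_n
    have hb1 : ∃ G, ∀ t, |g1 t| ≤ G := by
      obtain ⟨G, hG⟩ := hg1.2 0
      exact ⟨G, fun t => by simpa using hG t⟩
    have hb0 : ∃ G, ∀ t, |g t| ≤ G := by
      obtain ⟨G, hG⟩ := hg.2 0
      exact ⟨G, fun t => by simpa using hG t⟩
    obtain ⟨G, hG⟩ := hb1
    obtain ⟨G', hG'⟩ := hb0
    refine ⟨C, hC, fun i x hx => ?_⟩
    rw [ibpD A hA hdet m N hN (by omega : 2 * l + 2 < d) v (hv1 hv) g1 g hd1 hg.1 G G' hG hG' i x hx,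
      abs_neg]
    have e : ∫ z, Dop A v i z * g1 ((Fq A z - m) / x) =
        x * ∫ z, Dop A v i z * (x⁻¹ * g1 ((Fq A z - m) / x)) := by
      rw [← integral_const_mul]
      congr 1
      funext z
      field_simp
    rw [e, abs_mul, abs_of_pos hx]
    calc _ ≤ x * (C * x ^ M * N i) := mul_le_mul_of_nonneg_left (h i x hx) hx.le
      _ = _ := by ring

end

section
variable {d : ℕ}

lemma wNorm_nonneg {M : ℕ} {n2 : ℝ} {w : (Fin d → ℝ) → ℝ} (hw : MemC M n2 w) :
    0 ≤ wNorm M n2 w := by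
  have h : ‖iteratedFDeriv ℝ 0 w 0‖ * jap (0 : Fin d → ℝ) ^ n2 ≤ wNorm M n2 w :=
    le_csSup hw.2 ⟨0, 0, Nat.zero_le _, rfl⟩
  refine le_trans ?_ h
  have : 0 ≤ jap (0 : Fin d → ℝ) := le_max_of_le_left zero_le_one
  positivity

lemma Qs_le_jap (z : Fin d → ℝ) : 1 + Qs z ≤ (1 + d) * jap z ^ 2 := by
  have h1 : 1 ≤ jap z := le_max_left _ _
  have h2 : ‖z‖ ≤ jap z := le_max_right _ _
  have h3 : Qs z ≤ d * jap z ^ 2 := by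
    unfold Qs
    calc ∑ i, z i ^ 2 ≤ ∑ _i : Fin d, jap z ^ 2 := by
          refine Finset.sum_le_sum fun i _ => ?_
          have : |z i| ≤ jap z := (norm_le_pi_norm z i).trans h2
          rw [← sq_abs]
          gcongr
      _ = _ := by simp
  nlinarith

lemma jap_wt (z : Fin d → ℝ) :
    (jap z ^ ((d : ℝ) + 1))⁻¹ ≤ ((1 : ℝ) + d) ^ (((d : ℝ) + 1) / 2) * wt z := by
  have h1 : 1 ≤ jap z := le_max_left _ _
  have h0 : 0 ≤ jap z := by linarith
  have hq := Qs_nonneg z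
  have h2 := Qs_le_jap z
  have h3 : (1 + Qs z) ^ (((d : ℝ) + 1) / 2) ≤
      ((1 : ℝ) + d) ^ (((d : ℝ) + 1) / 2) * jap z ^ ((d : ℝ) + 1) := by
    calc _ ≤ ((1 + d) * jap z ^ 2) ^ (((d : ℝ) + 1) / 2) := by gcongr
      _ = _ := by
        rw [Real.mul_rpow (by positivity) (by positivity), ← Real.rpow_natCast (jap z) 2,
          ← Real.rpow_mul h0]
        congr 2
        push_cast
        ring
  have e : wt z = ((1 + Qs z) ^ (((d : ℝ) + 1) / 2))⁻¹ := by
    unfold wt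
    rw [← Real.rpow_neg (by positivity), neg_div]
  rw [e, ← div_eq_mul_inv, le_div_iff₀ (by positivity), inv_mul_eq_div, div_le_iff₀ (by positivity)]
  exact h3

lemma cls_w (M : ℕ) : Cls (ι := {w : (Fin d → ℝ) → ℝ // MemC M ((d : ℝ) + 1) w})
    (fun i z => wNorm M ((d : ℝ) + 1) i.1 * wt z) M 0 (fun i => i.1) := by
  refine cls_of_contDiff (fun i z => mul_nonneg (wNorm_nonneg i.2) (wt_nonneg z)) M 0 _
    (fun i => i.2.1) ⟨((1 : ℝ) + d) ^ (((d : ℝ) + 1) / 2), by positivity, fun k hk i z => ?_⟩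
  have h : ‖iteratedFDeriv ℝ k i.1 z‖ * jap z ^ ((d : ℝ) + 1) ≤ wNorm M ((d : ℝ) + 1) i.1 :=
    le_csSup i.2.2 ⟨k, z, hk, rfl⟩
  have h1 : 1 ≤ jap z := le_max_left _ _
  have hj : 0 < jap z ^ ((d : ℝ) + 1) := by positivity
  have hN := wNorm_nonneg i.2
  rw [← le_div_iff₀ hj, div_eq_mul_inv] at h
  refine h.trans ?_
  calc _ ≤ wNorm M ((d : ℝ) + 1) i.1 * (((1 : ℝ) + d) ^ (((d : ℝ) + 1) / 2) * wt z) := by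
        gcongr
        exact jap_wt z
    _ = _ := by ring

lemma tent_layer (y : ℝ) :
    ∫ s in Icc (0 : ℝ) 1, (if |y| ≤ s then (1 : ℝ) else 0) = tent y := by
  have : (fun s : ℝ => if |y| ≤ s then (1 : ℝ) else 0) = (Ici |y|).indicator (fun _ => 1) := by
    funext s
    simp [indicator, mem_Ici]
  rw [this, integral_indicator measurableSet_Ici, Measure.restrict_restrict measurableSet_Ici]
  have e : Ici |y| ∩ Icc 0 1 = Icc |y| 1 := by
    ext s
    simp only [mem_inter_iff, mem_Ici, mem_Icc]
    have := abs_nonneg y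
    constructor
    · rintro ⟨a, b, c⟩; exact ⟨a, c⟩
    · rintro ⟨a, b⟩; exact ⟨a, by linarith, b⟩
  rw [e]
  simp [tent, Measure.real, ENNReal.toReal_ofReal', max_comm]

lemma tent_formula (A : Matrix (Fin d) (Fin d) ℤ) (m : ℝ) (w : (Fin d → ℝ) → ℝ)
    (hw : Integrable w) (ε : ℝ) (hε : 0 < ε) :
    IntegrableOn (fun s : ℝ => ε⁻¹ * ∫ z in {z : Fin d → ℝ | |Fq A z - m| ≤ s * ε}, w z) (Icc 0 1) ∧
    ∫ z, w z * (ε⁻¹ * tent ((Fq A z - m) / ε)) =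
      ∫ s in Icc (0 : ℝ) 1, ε⁻¹ * ∫ z in {z : Fin d → ℝ | |Fq A z - m| ≤ s * ε}, w z := by
  have hFc := Fq_cont A
  let f : (Fin d → ℝ) → ℝ → ℝ := fun z s =>
    w z * (ε⁻¹ * (if |(Fq A z - m) / ε| ≤ s then (1 : ℝ) else 0))
  have hmeas : Measurable (fun p : (Fin d → ℝ) × ℝ =>
      ε⁻¹ * (if |(Fq A p.1 - m) / ε| ≤ p.2 then (1 : ℝ) else 0)) := by
    refine measurable_const.mul (Measurable.ite ?_ measurable_const measurable_const)
    exact (isClosed_le (by fun_prop) (by fun_prop)).measurableSet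
  have hf : Integrable (Function.uncurry f) ((volume : Measure (Fin d → ℝ)).prod
      (volume.restrict (Icc (0 : ℝ) 1))) := by
    have h1 : Integrable (fun p : (Fin d → ℝ) × ℝ => w p.1) ((volume : Measure (Fin d → ℝ)).prod
      (volume.restrict (Icc (0 : ℝ) 1))) := hw.comp_fst _
    refine (h1.norm.mul_const ε⁻¹).mono' (h1.1.mul hmeas.aestronglyMeasurable) ?_
    refine Eventually.of_forall fun p => ?_
    simp only [Function.uncurry, f]
    rw [norm_mul, norm_mul, Real.norm_of_nonneg (inv_pos.2 hε).le]
    refine mul_le_mul_of_nonneg_left (mul_le_of_le_one_right (inv_pos.2 hε).le ?_) (norm_nonneg _)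
    split_ifs <;> simp
  have hinner : ∀ s, ∫ z, f z s = ε⁻¹ * ∫ z in {z : Fin d → ℝ | |Fq A z - m| ≤ s * ε}, w z := by
    intro s
    have hS : MeasurableSet {z : Fin d → ℝ | |Fq A z - m| ≤ s * ε} :=
      (isClosed_le (by fun_prop) (by fun_prop)).measurableSet
    rw [← integral_indicator hS, ← integral_const_mul]
    congr 1
    funext z
    have : |(Fq A z - m) / ε| ≤ s ↔ |Fq A z - m| ≤ s * ε := by
      rw [abs_div, abs_of_pos hε, div_le_iff₀ hε]
    simp only [f, this, indicator, mem_ofPred_eq]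
    split_ifs <;> ring
  constructor
  · have := hf.integral_prod_right
    refine Integrable.congr this (Eventually.of_forall fun s => ?_)
    exact hinner s
  · have := integral_integral_swap hf
    simp_rw [hinner] at this
    rw [← this]
    congr 1
    funext z
    simp only [f]
    rw [integral_const_mul, integral_const_mul, tent_layer]

lemma tent_tendsto (A : Matrix (Fin d) (Fin d) ℤ) (m : ℝ) (w : (Fin d → ℝ) → ℝ)
    (hw : Integrable w) (σ : ℝ) (hσ : IsSigmaInf A m w σ) :
    Tendsto (fun ε : ℝ => ∫ z, w z * (ε⁻¹ * tent ((Fq A z - m) / ε))) (𝓝[>] 0) (𝓝 σ) := by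
  rw [Metric.tendsto_nhds]
  intro η hη
  unfold IsSigmaInf at hσ
  rw [Metric.tendsto_nhds] at hσ
  have h := hσ (η / 4) (by positivity)
  rw [eventually_nhdsWithin_iff, Metric.eventually_nhds_iff] at h
  obtain ⟨r, hr, h⟩ := h
  rw [eventually_nhdsWithin_iff, Metric.eventually_nhds_iff]
  refine ⟨r, hr, fun ε hεr hε => ?_⟩
  have hε : 0 < ε := hε
  rw [Real.dist_eq, sub_zero, abs_of_pos hε] at hεr
  obtain ⟨hi, he⟩ := tent_formula A m w hw ε hε
  rw [he, Real.dist_eq]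
  have hσi : σ = ∫ s in Icc (0 : ℝ) 1, 2 * s * σ := by
    rw [integral_mul_const, integral_Icc_eq_integral_Ioc,
      ← intervalIntegral.integral_of_le zero_le_one, intervalIntegral.integral_const_mul,
      integral_id]
    norm_num
  have hi2 : IntegrableOn (fun s : ℝ => 2 * s * σ) (Icc 0 1) :=
    (Continuous.continuousOn (by fun_prop)).integrableOn_Icc
  rw [show |(∫ s in Icc (0 : ℝ) 1, ε⁻¹ * ∫ z in {z : Fin d → ℝ | |Fq A z - m| ≤ s * ε}, w z) - σ| =
    |(∫ s in Icc (0 : ℝ) 1, ε⁻¹ * ∫ z in {z : Fin d → ℝ | |Fq A z - m| ≤ s * ε}, w z) -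
      ∫ s in Icc (0 : ℝ) 1, 2 * s * σ| by rw [← hσi], ← integral_sub hi hi2,
    integral_Icc_eq_integral_Ioc, ← intervalIntegral.integral_of_le zero_le_one]
  have := intervalIntegral.norm_integral_le_of_norm_le_const (a := (0 : ℝ)) (b := 1)
    (C := η / 2) (f := fun s => (ε⁻¹ * ∫ z in {z : Fin d → ℝ | |Fq A z - m| ≤ s * ε}, w z) -
      2 * s * σ) ?_
  · rw [Real.norm_eq_abs] at this
    refine this.trans_lt ?_
    norm_num
    linarith
  · intro s hs
    rw [uIoc_of_le zero_le_one] at hs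
    have hs0 : 0 < s := hs.1
    have hsε : 0 < s * ε := by positivity
    have := h (y := s * ε) (by
      rw [Real.dist_eq, sub_zero, abs_of_pos hsε]
      nlinarith [hs.2]) hsε
    rw [Real.dist_eq] at this
    have e : (ε⁻¹ * ∫ z in {z : Fin d → ℝ | |Fq A z - m| ≤ s * ε}, w z) - 2 * s * σ =
      2 * s * ((1 / (2 * (s * ε)) * ∫ z in {z : Fin d → ℝ | |Fq A z - m| ≤ s * ε}, w z) - σ) := by
      field_simp
    rw [e, norm_mul, Real.norm_of_nonneg (by positivity), Real.norm_eq_abs]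
    nlinarith [hs.2, abs_nonneg ((1 / (2 * (s * ε)) *
      ∫ z in {z : Fin d → ℝ | |Fq A z - m| ≤ s * ε}, w z) - σ)]

end

section
variable {d : ℕ}

lemma int_mul_rap (A : Matrix (Fin d) (Fin d) ℤ) (m : ℝ) (w : (Fin d → ℝ) → ℝ)
    (hw : Integrable w) (g : ℝ → ℝ) (hg : Rap g) (x : ℝ) :
    Integrable (fun z => w z * (x⁻¹ * g ((Fq A z - m) / x))) := by
  have hFc := Fq_cont A
  have hgc := hg.1
  obtain ⟨G, hG⟩ := hg.2 0
  have hc : Continuous fun z : Fin d → ℝ => x⁻¹ * g ((Fq A z - m) / x) := by fun_prop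
  refine hw.mul_bdd (c := |x⁻¹| * G) hc.aestronglyMeasurable (Eventually.of_forall fun z => ?_)
  rw [Real.norm_eq_abs, abs_mul]
  have := hG ((Fq A z - m) / x)
  rw [pow_zero, one_mul] at this
  gcongr

lemma dyadic (P : ℝ → ℝ) (σ K : ℝ) (hK : 0 ≤ K) (M : ℕ) (hM : 1 ≤ M)
    (h : ∀ x, 0 < x → |P x - P (x / 2)| ≤ K * x ^ M) (hl : Tendsto P (𝓝[>] 0) (𝓝 σ))
    (x : ℝ) (hx : 0 < x) : |P x - σ| ≤ 2 * K * x ^ M := by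
  have h1 : ∀ n : ℕ, |P x - P (x / 2 ^ n)| ≤ K * x ^ M * (2 - 2 / 2 ^ n) := by
    intro n
    induction n with
    | zero => simp
    | succ n ih =>
      have a := h (x / 2 ^ n) (by positivity)
      have e : x / 2 ^ n / 2 = x / 2 ^ (n + 1) := by rw [pow_succ]; field_simp
      rw [e] at a
      have b : (x / 2 ^ n) ^ M ≤ x ^ M * (1 / 2 ^ n) := by
        rw [div_pow, div_eq_mul_one_div]
        gcongr
        exact le_self_pow₀ (one_le_pow₀ (by norm_num)) (by omega)
      calc |P x - P (x / 2 ^ (n + 1))| ≤ |P x - P (x / 2 ^ n)| + |P (x / 2 ^ n) - P (x / 2 ^ (n + 1))| :=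
            abs_sub_le _ _ _
        _ ≤ K * x ^ M * (2 - 2 / 2 ^ n) + K * (x ^ M * (1 / 2 ^ n)) := by
            refine add_le_add ih (a.trans ?_)
            gcongr
        _ = _ := by
            rw [pow_succ]
            field_simp
            ring
  have h2 : ∀ n : ℕ, |P x - P (x / 2 ^ n)| ≤ 2 * K * x ^ M := by
    intro n
    refine (h1 n).trans ?_
    have : (0 : ℝ) ≤ 2 / 2 ^ n := by positivity
    have : 0 ≤ K * x ^ M := by positivity
    nlinarith
  have ht : Tendsto (fun n : ℕ => x / 2 ^ n) atTop (𝓝[>] 0) := by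
    refine tendsto_nhdsWithin_iff.2 ⟨?_, Eventually.of_forall fun n => by
      show 0 < x / 2 ^ n; positivity⟩
    have := (tendsto_pow_atTop_nhds_zero_of_lt_one (r := (1 / 2 : ℝ)) (by norm_num)
      (by norm_num)).const_mul x
    rw [mul_zero] at this
    refine this.congr fun n => ?_
    rw [div_pow, one_pow, mul_one_div]
  refine le_of_tendsto ((tendsto_const_nhds.sub (hl.comp ht)).abs) (Eventually.of_forall h2)

lemma main_bound (A : Matrix (Fin d) (Fin d) ℤ) (hA : A.IsSymm) (hdet : A.det ≠ 0)
    (M : ℕ) (hM1 : 1 ≤ M) (hM : 2 * M + 2 < d) (m : ℝ) :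
    ∃ C : ℝ, 0 ≤ C ∧ ∀ x : ℝ, 0 < x → ∀ w : (Fin d → ℝ) → ℝ, MemC M ((d : ℝ) + 1) w →
      ∀ σ : ℝ, IsSigmaInf A m w σ →
        |(∫ z : Fin d → ℝ, w z * hFun x (Fq A z - m)) - σ| ≤
          C * x ^ M * wNorm M ((d : ℝ) + 1) w := by
  let N : {w : (Fin d → ℝ) → ℝ // MemC M ((d : ℝ) + 1) w} → ℝ := fun i => wNorm M ((d : ℝ) + 1) i.1
  have hN : ∀ i, 0 ≤ N i := fun i => wNorm_nonneg i.2
  have hcl := cls_w (d := d) M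
  have hcl1 : Cls (ι := {w : (Fin d → ℝ) → ℝ // MemC M ((d : ℝ) + 1) w})
      (fun i z => wNorm M ((d : ℝ) + 1) i.1 * wt z) 1 0 (fun i => i.1) := by
    have : ∀ n : ℕ, Cls (ι := {w : (Fin d → ℝ) → ℝ // MemC M ((d : ℝ) + 1) w})
      (fun i z => wNorm M ((d : ℝ) + 1) i.1 * wt z) (n + 1) 0 (fun i => i.1) →
      Cls (ι := {w : (Fin d → ℝ) → ℝ // MemC M ((d : ℝ) + 1) w})
      (fun i z => wNorm M ((d : ℝ) + 1) i.1 * wt z) 1 0 (fun i => i.1) := by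
      intro n
      induction n with
      | zero => exact id
      | succ n ih => exact fun h => ih h.mono_n
    refine this (M - 1) ?_
    rw [Nat.sub_add_cancel hM1]
    exact hcl
  obtain ⟨C1, hC1, h1⟩ := key A hA hdet m N hN M 0 (fun i => i.1) kdiff kdiff_rap
    (fun i _ => kdiff_moment i) hcl (by omega)
  obtain ⟨C2, hC2, h2⟩ := key A hA hdet m N hN 1 0 (fun i => i.1) ktent ktent_rap
    ktent_moment hcl1 (by omega)
  obtain ⟨C3, hC3, h3⟩ := hcl.bd
  obtain ⟨C4, hC4, h4⟩ := cF_bound (M + 1) (by omega)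
  have hJ : 0 ≤ ∫ z : Fin d → ℝ, wt z := integral_nonneg fun z => wt_nonneg z
  have hJi : Integrable (wt (d := d)) := by simpa using wt_int (d := d) 0 (by omega)
  have hae := ae_ne_zero (d := d) (by omega)
  refine ⟨C4 * (C3 * ∫ z : Fin d → ℝ, wt z) + 2 * C1, by positivity, fun x hx w hw σ hσ => ?_⟩
  have hNw : 0 ≤ wNorm M ((d : ℝ) + 1) w := wNorm_nonneg hw
  have hb : ∀ᵐ z : Fin d → ℝ, ‖w z‖ ≤ C3 * wNorm M ((d : ℝ) + 1) w * wt z := by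
    filter_upwards [hae] with z hz
    have := h3 ⟨w, hw⟩ z hz
    rw [pow_zero, mul_one, ← mul_assoc] at this
    exact this
  have hwi : Integrable w := (hJi.const_mul _).mono' hw.1.continuous.aestronglyMeasurable hb
  have hwb : |∫ z, w z| ≤ C3 * wNorm M ((d : ℝ) + 1) w * ∫ z : Fin d → ℝ, wt z := by
    rw [← integral_const_mul, ← Real.norm_eq_abs]
    exact norm_integral_le_of_norm_le (hJi.const_mul _) hb
  let P : ℝ → ℝ := fun x => ∫ z, w z * (x⁻¹ * kap ((Fq A z - m) / x))
  let T : ℝ → ℝ := fun x => ∫ z, w z * (x⁻¹ * tent ((Fq A z - m) / x))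
  have hPd : ∀ x, 0 < x → |P x - P (x / 2)| ≤ (C1 * wNorm M ((d : ℝ) + 1) w) * x ^ M := by
    intro x hx
    have := h1 ⟨w, hw⟩ x hx
    have e : P x - P (x / 2) = ∫ z, w z * (x⁻¹ * kdiff ((Fq A z - m) / x)) := by
      simp only [P]
      rw [← integral_sub (int_mul_rap A m w hwi kap kap_rap x)
        (int_mul_rap A m w hwi kap kap_rap (x / 2))]
      congr 1
      funext z
      unfold kdiff
      rw [show (Fq A z - m) / (x / 2) = 2 * ((Fq A z - m) / x) by field_simp,
        show (x / 2)⁻¹ = 2 * x⁻¹ by field_simp]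
      ring
    rw [e]
    refine this.trans_eq ?_
    simp only [N]
    ring
  have hPT : ∀ x, 0 < x → |P x - T x| ≤ C2 * wNorm M ((d : ℝ) + 1) w * x := by
    intro x hx
    have := h2 ⟨w, hw⟩ x hx
    have e : P x - T x = ∫ z, w z * (x⁻¹ * ktent ((Fq A z - m) / x)) := by
      simp only [P, T]
      rw [← integral_sub (int_mul_rap A m w hwi kap kap_rap x)
        (int_mul_rap A m w hwi tent tent_rap x)]
      congr 1
      funext z
      unfold ktent
      ring
    rw [e]
    refine this.trans_eq ?_
    simp only [N]
    ring
  have hT : Tendsto T (𝓝[>] 0) (𝓝 σ) := tent_tendsto A m w hwi σ hσ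
  have hPlim : Tendsto P (𝓝[>] 0) (𝓝 σ) := by
    have hz : Tendsto (fun x => P x - T x) (𝓝[>] 0) (𝓝 0) := by
      refine squeeze_zero_norm' (a := fun x => C2 * wNorm M ((d : ℝ) + 1) w * x) ?_ ?_
      · filter_upwards [self_mem_nhdsWithin] with x hx using hPT x hx
      · have : Tendsto (fun x : ℝ => C2 * wNorm M ((d : ℝ) + 1) w * x) (𝓝 0)
            (𝓝 (C2 * wNorm M ((d : ℝ) + 1) w * 0)) :=
          (continuous_const.mul continuous_id).tendsto 0
        rw [mul_zero] at this
        exact this.mono_left nhdsWithin_le_nhds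
    have := hz.add hT
    rw [zero_add] at this
    exact this.congr fun x => by ring
  have hmain := dyadic P σ (C1 * wNorm M ((d : ℝ) + 1) w) (by positivity) M hM1 hPd hPlim x hx
  have e : ∫ z : Fin d → ℝ, w z * hFun x (Fq A z - m) =
      (cF x - Kom) / x * (∫ z, w z) + P x := by
    simp only [P]
    rw [← integral_const_mul, ← integral_add (hwi.const_mul _)
      (int_mul_rap A m w hwi kap kap_rap x)]
    congr 1
    funext z
    rw [hFun_eq x _ hx]
    ring
  have hc : |(cF x - Kom) / x| ≤ C4 * x ^ M := by
    rw [abs_div, abs_of_pos hx, div_le_iff₀ hx]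
    refine (h4 x hx).trans_eq ?_
    ring
  rw [e, add_sub_assoc]
  refine (abs_add_le _ _).trans ?_
  rw [abs_mul]
  calc _ ≤ (C4 * x ^ M) * (C3 * wNorm M ((d : ℝ) + 1) w * ∫ z : Fin d → ℝ, wt z) +
        2 * (C1 * wNorm M ((d : ℝ) + 1) w) * x ^ M := by gcongr
    _ = _ := by ring

end

/-- (Proposition on `I_q(0)`, part a), `d ≥ 5`):
`I_q(0;A,m,L) = L^d σ_∞(w;A,m) + O(q^{M−δ} L^{d−M+δ} ‖w‖_{M,d+1})`, where
`I_q(0;A,m,L) = L^d ∫ w(z) h(q/L, F(z)−m) dz`. -/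
theorem stmt_10 (d : ℕ) (hd : 5 ≤ d)
    (A : Matrix (Fin d) (Fin d) ℤ) (hA : A.IsSymm) (hdet : A.det ≠ 0)
    (heven : ∀ i, 2 ∣ A i i)
    (M : ℕ) (hM1 : 1 ≤ M) (hM : (M : ℝ) < (d : ℝ) / 2 - 1)
    (m : ℝ) (Cb : ℝ) (hCb : 0 < Cb) (δ : ℝ) (hδ : 0 < δ) :
    ∃ C : ℝ, ∀ L : ℝ, 1 ≤ L → ∀ q : ℝ, 0 < q → q ≤ Cb * L →
      ∀ w : (Fin d → ℝ) → ℝ, MemC M ((d : ℝ) + 1) w →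
        ∀ sigInf : ℝ, IsSigmaInf A m w sigInf →
          |L ^ (d : ℝ) * (∫ z : Fin d → ℝ, w z * hFun (q / L) (Fq A z - m)) -
              L ^ (d : ℝ) * sigInf| ≤
            C * q ^ ((M : ℝ) - δ) * L ^ ((d : ℝ) - M + δ) * wNorm M ((d : ℝ) + 1) w := by
  have hMd : 2 * M + 2 < d := by
    have : (2 * M + 2 : ℝ) < d := by linarith
    exact_mod_cast this
  obtain ⟨C, hC, h⟩ := main_bound A hA hdet M hM1 hMd m
  refine ⟨C * Cb ^ δ, fun L hL q hq hqL w hw σ hσ => ?_⟩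
  have hL0 : 0 < L := by linarith
  have hx : 0 < q / L := by positivity
  have hb := h (q / L) hx w hw σ hσ
  have hNw : 0 ≤ wNorm M ((d : ℝ) + 1) w := wNorm_nonneg hw
  have hxC : q / L ≤ Cb := (div_le_iff₀ hL0).2 hqL
  have hp : (q / L) ^ M ≤ (q / L) ^ ((M : ℝ) - δ) * Cb ^ δ := by
    calc (q / L) ^ M = (q / L) ^ ((M : ℝ) - δ) * (q / L) ^ δ := by
          rw [← Real.rpow_add hx, sub_add_cancel, Real.rpow_natCast]
      _ ≤ _ := by gcongr
  have hq2 : L ^ (d : ℝ) * (q / L) ^ ((M : ℝ) - δ) =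
      q ^ ((M : ℝ) - δ) * L ^ ((d : ℝ) - M + δ) := by
    rw [Real.div_rpow hq.le hL0.le, show (d : ℝ) - M + δ = d - (M - δ) by ring,
      Real.rpow_sub hL0 (d : ℝ)]
    ring
  rw [← mul_sub, abs_mul, abs_of_pos (by positivity : 0 < L ^ (d : ℝ))]
  calc _ ≤ L ^ (d : ℝ) * (C * ((q / L) ^ ((M : ℝ) - δ) * Cb ^ δ) * wNorm M ((d : ℝ) + 1) w) := by
        refine mul_le_mul_of_nonneg_left (hb.trans ?_) (by positivity)
        gcongr
    _ = C * Cb ^ δ * (L ^ (d : ℝ) * (q / L) ^ ((M : ℝ) - δ)) * wNorm M ((d : ℝ) + 1) w := by ring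
    _ = _ := by rw [hq2]; ring

end
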